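/- (Multiplicativity of intrinsic elements) Let 𝒜 be a hyperplane arrangement in ℝ^n and for t ∈ ℝ let ν_t be its intrinsic element. Then for all s, t ∈ ℝ one has ν_s · ν_t = ν_{st} in the Tits algebra ℝΣ[𝒜]. Moreover, ν_1 equals the unit element υ = Σ_{F essentially bounded} (−1)^{rk(F)} H_F of ℝΣ[𝒜], and ν_{−1} equals the Takeuchi element τ = Σ_F (−1)^{rk(F)} H_F (sum over all faces). -/

import Mathlib

open Finset MeasureTheory

noncomputable section

namespace CharElts

/-- Ambient Euclidean space `ℝ^n`. -/
abbrev V (n : ℕ) := EuclideanSpace ℝ (Fin n)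

/-- An affine functional on `ℝ^n`; a hyperplane is its zero set. -/
abbrev AffForm (n : ℕ) := V n →ᵃ[ℝ] ℝ

/-- The hyperplane determined by an affine functional. -/
def hypSet {n : ℕ} (ℓ : AffForm n) : Set (V n) := {x | ℓ x = 0}

variable {n : ℕ} (𝒜 : Finset (AffForm n))

/-- Index type for the hyperplanes of the arrangement. -/
abbrev Idx := {ℓ : AffForm n // ℓ ∈ 𝒜}

/-- The (possibly empty) set cut out by a sign vector `σ`. -/
def faceSet (σ : Idx 𝒜 → SignType) : Set (V n) :=
  {x | ∀ ℓ : Idx 𝒜, SignType.sign (ℓ.1 x) = σ ℓ}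

/-- A face of the arrangement: a sign vector whose face set is nonempty. -/
@[ext] structure Face where
  sgn : Idx 𝒜 → SignType
  nonempty : (faceSet 𝒜 sgn).Nonempty

open Classical in
instance : Fintype (Face 𝒜) :=
  Fintype.ofInjective Face.sgn (fun F G h => by cases F; cases G; simpa using h)

/-- The underlying point set of a face. -/
def Face.carrier (F : Face 𝒜) : Set (V n) := faceSet 𝒜 F.sgn

/-- A flat: a nonempty intersection of some subcollection of the hyperplanes
(the empty intersection gives all of `ℝ^n`). -/
def IsFlat (X : Set (V n)) : Prop :=
  X.Nonempty ∧ ∃ P : Idx 𝒜 → Prop, X = ⋂ ℓ ∈ {ℓ : Idx 𝒜 | P ℓ}, hypSet ℓ.1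

/-- The poset of flats, ordered by inclusion. -/
def Flat := {X : Set (V n) // IsFlat 𝒜 X}

instance : PartialOrder (Flat 𝒜) :=
  inferInstanceAs (PartialOrder {X : Set (V n) // IsFlat 𝒜 X})

lemma flat_eq_inter (X : Flat 𝒜) :
    X.1 = ⋂ ℓ ∈ {ℓ : Idx 𝒜 | X.1 ⊆ hypSet ℓ.1}, hypSet ℓ.1 := by
  obtain ⟨Z, hne, P, rfl⟩ := X
  apply subset_antisymm
  · intro x hx
    simp only [Set.mem_iInter, Set.mem_setOf_eq]
    intro ℓ hℓ
    exact hℓ hx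
  · intro x hx
    simp only [Set.mem_iInter, Set.mem_setOf_eq] at hx ⊢
    intro ℓ hℓ
    refine hx ℓ ?_
    intro y hy
    simp only [Set.mem_iInter, Set.mem_setOf_eq] at hy
    exact hy ℓ hℓ

open Classical in
instance : Fintype (Flat 𝒜) :=
  Fintype.ofInjective (fun X : Flat 𝒜 => {ℓ : Idx 𝒜 | X.1 ⊆ hypSet ℓ.1}) <| by
    intro X Y h
    dsimp only at h
    apply Subtype.ext
    rw [flat_eq_inter 𝒜 X, flat_eq_inter 𝒜 Y, h]

/-- The top flat: the whole ambient space. -/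
def topFlat : Flat 𝒜 :=
  ⟨Set.univ, ⟨⟨0, trivial⟩, fun _ => False, by simp⟩⟩

/-- The support of a face: the intersection of the hyperplanes on which it lies. -/
def supp (F : Face 𝒜) : Flat 𝒜 :=
  ⟨⋂ ℓ ∈ {ℓ : Idx 𝒜 | F.sgn ℓ = 0}, hypSet ℓ.1, by
    constructor
    · obtain ⟨x, hx⟩ := F.nonempty
      refine ⟨x, ?_⟩
      simp only [Set.mem_iInter, Set.mem_setOf_eq]
      intro ℓ hℓ
      have h0 := hx ℓ
      rw [hℓ] at h0
      simpa [hypSet, sign_eq_zero_iff] using h0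
    · exact ⟨fun ℓ => F.sgn ℓ = 0, rfl⟩⟩

/-- The dimension of (the affine hull of) a subset of `ℝ^n`. -/
def dimS (X : Set (V n)) : ℕ := Module.finrank ℝ (vectorSpan ℝ X)

open Classical in
/-- An element `w = Σ_F w^F H_F` of the Tits algebra (recorded by its coefficient
vector) is *characteristic of parameter `t`* if for every flat `X`, the sum of the
coefficients of the faces with support contained in `X` equals `t ^ rk X`,
where `rk X = dim X - d` and `d` is the common dimension of the minimal flats. -/
def IsCharacteristic (d : ℕ) (w : Face 𝒜 → ℝ) (t : ℝ) : Prop :=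
  ∀ X : Flat 𝒜,
    (∑ F : Face 𝒜, if (supp 𝒜 F).1 ⊆ X.1 then w F else 0) = t ^ (dimS X.1 - d)

/-- The sign vector of the Tits product `FG` of two faces. -/
def combineSgn {I : Type*} (σ τ : I → SignType) : I → SignType :=
  fun ℓ => if σ ℓ = 0 then τ ℓ else σ ℓ

open Classical in
/-- The product of the Tits algebra, on coefficient vectors:
`(u·v)^C = Σ_{F,G : FG = C} u^F v^G`, extending `H_F · H_G = H_{FG}` bilinearly. -/
def mulT (u v : Face 𝒜 → ℝ) : Face 𝒜 → ℝ :=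
  fun C => ∑ F : Face 𝒜, ∑ G : Face 𝒜,
    if combineSgn F.sgn G.sgn = C.sgn then u F * v G else 0

open Classical in
/-- The basis element `H_F` of the Tits algebra, as a coefficient vector. -/
def unitV (F : Face 𝒜) : Face 𝒜 → ℝ := fun G => if G = F then 1 else 0

/-- A chamber: a face whose sign vector is nowhere zero. -/
def IsChamber (F : Face 𝒜) : Prop := ∀ ℓ : Idx 𝒜, F.sgn ℓ ≠ 0

open Classical in
/-- `IsMoebius 𝒜 μ` states that `μ` is the Möbius function of the poset of
flats of `𝒜` (these conditions determine `μ` uniquely). -/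
def IsMoebius (μ : Flat 𝒜 → Flat 𝒜 → ℝ) : Prop :=
  (∀ X, μ X X = 1) ∧
  (∀ X Y : Flat 𝒜, X < Y →
    (∑ Z : Flat 𝒜, if X ≤ Z ∧ Z ≤ Y then μ X Z else 0) = 0) ∧
  (∀ X Y : Flat 𝒜, ¬ X ≤ Y → μ X Y = 0)

open Classical in
/-- `χ(𝒜^X, t) = Σ_{Y ≤ X} μ(Y, X) t^{rk Y}`: the characteristic polynomial of the
arrangement under the flat `X`.  Taking `X = ⊤` gives the characteristic
polynomial of `𝒜` itself. -/
def charPolyUnder (μ : Flat 𝒜 → Flat 𝒜 → ℝ) (d : ℕ) (X : Flat 𝒜) (t : ℝ) : ℝ :=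
  ∑ Y : Flat 𝒜, if Y ≤ X then μ Y X * t ^ (dimS Y.1 - d) else 0

/-- The space of directions `L = ⋂_{H ∈ 𝒜} dir(H)`: the intersection of the kernels of
the linear parts of the defining functionals. -/
def dirL : Submodule ℝ (V n) := ⨅ ℓ : Idx 𝒜, LinearMap.ker ℓ.1.linear

/-- A face is essentially bounded if its image in `ℝ^n / L` is bounded. -/
def EssBounded (F : Face 𝒜) : Prop :=
  Bornology.IsBounded ((dirL 𝒜).mkQ '' F.carrier)

/-- A hyperplane (zero set of a nonconstant affine functional) is nonempty. -/
lemma hyp_nonempty (ℓ : AffForm n) (h : ℓ.linear ≠ 0) : (hypSet ℓ).Nonempty := by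
  obtain ⟨v, hv⟩ : ∃ v, ℓ.linear v ≠ 0 := by
    by_contra hc
    push_neg at hc
    exact h (LinearMap.ext fun v => hc v)
  refine ⟨((-ℓ 0) / (ℓ.linear v)) • v, ?_⟩
  have hdecomp : ℓ (((-ℓ 0) / (ℓ.linear v)) • v)
      = ℓ.linear (((-ℓ 0) / (ℓ.linear v)) • v) + ℓ 0 := by
    conv_lhs => rw [show ((-ℓ 0) / (ℓ.linear v)) • v = ((-ℓ 0) / (ℓ.linear v)) • v +ᵥ (0 : V n)
      from (add_zero _).symm]
    rw [AffineMap.map_vadd]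
    rfl
  show ℓ _ = 0
  rw [hdecomp, LinearMap.map_smul, smul_eq_mul, div_mul_cancel₀ _ hv, neg_add_cancel]

/-- The set of nearest points of `P` to `x`. -/
def nearestPts {n : ℕ} (P : Set (V n)) (x : V n) : Set (V n) :=
  {y ∈ P | ∀ z ∈ P, dist x y ≤ dist x z}

/-- Faces of a polyhedron `P`: `P` itself, or a nonempty subset of the form
`{x ∈ P | ℓ x = sup_P ℓ}` for a linear functional `ℓ` bounded above on `P`. -/
def IsPolyFace {n : ℕ} (P Q : Set (V n)) : Prop :=
  Q = P ∨ (Q.Nonempty ∧ ∃ ℓ : V n →ₗ[ℝ] ℝ, BddAbove (ℓ '' P) ∧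
    Q = {x ∈ P | ℓ x = sSup (ℓ '' P)})

/-- `S_k(P)`: the set of points of `ℝ^n` whose nearest point in `P` lies in the
relative interior of some `k`-dimensional face of `P`. -/
def projSet {n : ℕ} (P : Set (V n)) (k : ℕ) : Set (V n) :=
  {x | ∃ y ∈ nearestPts P x, ∃ Q : Set (V n),
    IsPolyFace P Q ∧ dimS Q = k ∧ y ∈ intrinsicInterior ℝ Q}

/-- `HasIntrinsicVolumes P v` says that for each `k`, the proportion of the volume of
space occupied by `S_k(P)` exists and equals `v k`, i.e.
`v_k(P) = lim_{R→∞} vol(S_k(P) ∩ B(0,R)) / vol(B(0,R))`. -/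
def HasIntrinsicVolumes {n : ℕ} (P : Set (V n)) (v : ℕ → ℝ) : Prop :=
  ∀ k : ℕ, Filter.Tendsto
    (fun R : ℝ =>
      (volume (projSet P k ∩ Metric.ball (0 : V n) R)).toReal /
        (volume (Metric.ball (0 : V n) R)).toReal)
    Filter.atTop (nhds (v k))

/-- The coefficient vector of the intrinsic element `ν_t` of parameter `t`,
with `d = dim L`. -/
def intrinsicElt {n : ℕ} (𝒜 : Finset (AffForm n)) (v : Face 𝒜 → ℕ → ℝ) (t : ℝ) :
    Face 𝒜 → ℝ :=
  fun F => (-1 : ℝ) ^ (dimS (Face.carrier 𝒜 F)) *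
    ∑ k ∈ Finset.Icc (Module.finrank ℝ (dirL 𝒜)) (dimS (Face.carrier 𝒜 F)),
      (-1 : ℝ) ^ k * v F k * t ^ (k - Module.finrank ℝ (dirL 𝒜))

/-!
As a point goes to infinity in a generic direction `z`, its nearest point in `cl C` eventually stays
in the relative interior of a fixed face `H ≤ C`.  Hence `v_k(cl C)` is the sum, over the
`k`-dimensional faces `H ≤ C`, of the Gaussian measure `α(H, C)` of the directions selecting `H`,
and `α(H, C)` is an internal angle times an external angle.  When `ν_s · ν_t` is expanded in these
angles, the coefficient of a pair of faces `(H, K)` is an alternating sum over the faces in a union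
of cells that miss an open half-space; by the Euler characteristic of convex sets only the terms
`H = K` survive, which is multiplicativity.

The angles `α(H, C)` of a face `C` sum to `1`, so `ν_{-1}` is the Takeuchi element.  If `C` is
essentially bounded then `α(H, C) = 0` unless `H` is minimal, which gives the coefficient of `C` in
`ν_1`.  For the other faces `ν_1 = ν_{-1} · ν_{-1}` turns this coefficient into the alternating sum
over the faces `F ≤ C`, which cancels along the translates in an unbounded direction of `C`.
-/

section SignCells

open Filter Topology

variable {ι E : Type*}

lemma combineSgn_of_eq_zero {σ τ : ι → SignType} {i : ι} (h : σ i = 0) :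
    combineSgn σ τ i = τ i := if_pos h

lemma combineSgn_of_ne_zero {σ τ : ι → SignType} {i : ι} (h : σ i ≠ 0) :
    combineSgn σ τ i = σ i := if_neg h

variable [AddCommGroup E] [Module ℝ E]

lemma affine_add_smul (f : E →ᵃ[ℝ] ℝ) (x v : E) (c : ℝ) :
    f (x + c • v) = f x + c * f.linear v := by
  have h := f.map_vadd x (c • v)
  rw [vadd_eq_add, vadd_eq_add, add_comm, map_smul, smul_eq_mul] at h
  rw [h, add_comm]

lemma affine_linear_sub (f : E →ᵃ[ℝ] ℝ) (x y : E) : f.linear (x - y) = f x - f y :=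
  f.linearMap_vsub x y

lemma eventually_sign_add_mul (a b : ℝ) :
    ∀ᶠ ε : ℝ in 𝓝[>] 0,
      SignType.sign (a + ε * b) = if a = 0 then SignType.sign b else SignType.sign a := by
  have hlim : Tendsto (fun ε : ℝ => a + ε * b) (𝓝[>] 0) (𝓝 a) := by
    have hcont : Continuous fun ε : ℝ => a + ε * b := by fun_prop
    simpa using (hcont.tendsto 0).mono_left nhdsWithin_le_nhds
  rcases lt_trichotomy a 0 with ha | rfl | ha
  · filter_upwards [hlim.eventually (gt_mem_nhds ha)] with ε hε
    rw [if_neg ha.ne, sign_neg hε, sign_neg ha]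
  · filter_upwards [self_mem_nhdsWithin] with ε hε
    rw [if_pos rfl, zero_add, sign_mul, sign_pos hε, one_mul]
  · filter_upwards [hlim.eventually (lt_mem_nhds ha)] with ε hε
    rw [if_neg ha.ne', sign_pos hε, sign_pos ha]

lemma eventually_sign_add_smul [Finite ι] (f : ι → E →ᵃ[ℝ] ℝ) (x v : E) :
    ∀ᶠ ε : ℝ in 𝓝[>] 0, ∀ i, SignType.sign (f i (x + ε • v)) =
      combineSgn (fun i => SignType.sign (f i x))
        (fun i => SignType.sign ((f i).linear v)) i := by
  rw [eventually_all]
  intro i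
  filter_upwards [eventually_sign_add_mul (f i x) ((f i).linear v)] with ε hε
  simp only [affine_add_smul, hε, combineSgn, sign_eq_zero_iff]

lemma eventually_sign_add_smul_atTop [Finite ι] (f : ι → E →ᵃ[ℝ] ℝ) (x v : E) :
    ∀ᶠ r : ℝ in atTop, ∀ i, SignType.sign (f i (x + r • v)) =
      combineSgn (fun i => SignType.sign ((f i).linear v))
        (fun i => SignType.sign (f i x)) i := by
  rw [eventually_all]
  intro i
  filter_upwards [eventually_gt_atTop 0, tendsto_inv_atTop_nhdsGT_zero.eventually
    (eventually_sign_add_mul ((f i).linear v) (f i x))] with r hr h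
  have hscale : f i (x + r • v) = r * ((f i).linear v + r⁻¹ * f i x) := by
    rw [affine_add_smul]
    field_simp
    ring
  simp only [hscale, sign_mul, sign_pos hr, one_mul, h, combineSgn, sign_eq_zero_iff]

lemma convex_setOf_sign_eq (f : E →ᵃ[ℝ] ℝ) (s : SignType) :
    Convex ℝ {x | SignType.sign (f x) = s} := by
  refine Convex.affine_preimage f (s := {y : ℝ | SignType.sign y = s}) ?_
  cases s
  · simp only [SignType.zero_eq_zero, sign_eq_zero_iff]
    exact convex_singleton (0 : ℝ)
  · simp only [SignType.neg_eq_neg_one, sign_eq_neg_one_iff]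
    exact convex_Iio (0 : ℝ)
  · simp only [SignType.pos_eq_one, sign_eq_one_iff]
    exact convex_Ioi (0 : ℝ)

/-- The set cut out by a sign vector `σ` for a family of affine functionals; for the hyperplanes
of an arrangement this is `faceSet`. -/
def signCell (f : ι → E →ᵃ[ℝ] ℝ) (σ : ι → SignType) : Set E :=
  {x | ∀ i, SignType.sign (f i x) = σ i}

/-- The direction space of a nonempty `signCell f σ`. -/
def signDir (f : ι → E →ᵃ[ℝ] ℝ) (σ : ι → SignType) : Submodule ℝ E :=
  ⨅ i, ⨅ (_ : σ i = 0), LinearMap.ker (f i).linear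

lemma mem_signDir {f : ι → E →ᵃ[ℝ] ℝ} {σ : ι → SignType} {v : E} :
    v ∈ signDir f σ ↔ ∀ i, σ i = 0 → (f i).linear v = 0 := by
  simp only [signDir, Submodule.mem_iInf, LinearMap.mem_ker]

/-- `W` is convex and relatively open in a translate of `B`. Openness is only required along
rays, so that no topology on `E` is involved. -/
structure IsRelOpenConvex (W : Set E) (B : Submodule ℝ E) : Prop where
  convex : Convex ℝ W
  sub_mem : ∀ x ∈ W, ∀ y ∈ W, x - y ∈ B
  eventually_add_smul_mem : ∀ x ∈ W, ∀ v ∈ B, ∀ᶠ ε : ℝ in 𝓝[>] 0, x + ε • v ∈ W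

lemma isRelOpenConvex_top {V : Type*} [NormedAddCommGroup V] [NormedSpace ℝ V] {U : Set V}
    (hU : IsOpen U) (hconv : Convex ℝ U) : IsRelOpenConvex U ⊤ where
  convex := hconv
  sub_mem _ _ _ _ := Submodule.mem_top
  eventually_add_smul_mem x hx v _ := by
    have hcont : Continuous fun ε : ℝ => x + ε • v := by fun_prop
    have hlim : Tendsto (fun ε : ℝ => x + ε • v) (𝓝[>] 0) (𝓝 x) := by
      simpa using (hcont.tendsto 0).mono_left nhdsWithin_le_nhds
    exact hlim.eventually (hU.mem_nhds hx)

lemma IsRelOpenConvex.inter_signCell [Finite ι] {W : Set E} {B : Submodule ℝ E}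
    (hW : IsRelOpenConvex W B) (f : ι → E →ᵃ[ℝ] ℝ) (σ : ι → SignType) :
    IsRelOpenConvex (W ∩ signCell f σ) (B ⊓ signDir f σ) where
  convex := by
    have hcell : signCell f σ = ⋂ i, {x | SignType.sign (f i x) = σ i} := by
      ext x
      simp only [signCell, Set.mem_ofPred_eq, Set.mem_iInter]
    rw [hcell]
    exact hW.convex.inter (convex_iInter fun i => convex_setOf_sign_eq (f i) (σ i))
  sub_mem x hx y hy := by
    refine ⟨hW.sub_mem x hx.1 y hy.1, mem_signDir.2 fun i hi => ?_⟩
    rw [affine_linear_sub, sign_eq_zero_iff.1 ((hx.2 i).trans hi),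
      sign_eq_zero_iff.1 ((hy.2 i).trans hi), sub_zero]
  eventually_add_smul_mem x hx v hv := by
    filter_upwards [hW.eventually_add_smul_mem x hx.1 v hv.1,
      eventually_sign_add_smul f x v] with ε hεW hε
    refine ⟨hεW, fun i => ?_⟩
    rw [hε i, funext hx.2]
    by_cases hi : σ i = 0
    · rw [combineSgn_of_eq_zero hi, mem_signDir.1 hv.2 i hi, sign_zero, hi]
    · rw [combineSgn_of_ne_zero hi]

open Classical in
/-- The Euler characteristic with compact support of a relatively open convex set `W` with
direction space `B`. -/
def eulerChar (W : Set E) (B : Submodule ℝ E) : ℝ :=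
  if W.Nonempty then (-1) ^ Module.finrank ℝ B else 0

lemma eulerChar_of_nonempty {W : Set E} (h : W.Nonempty) (B : Submodule ℝ E) :
    eulerChar W B = (-1) ^ Module.finrank ℝ B := if_pos h

@[simp]
lemma eulerChar_empty (B : Submodule ℝ E) : eulerChar (∅ : Set E) B = 0 :=
  if_neg Set.not_nonempty_empty

lemma finrank_inf_ker_add_one [FiniteDimensional ℝ E] {B : Submodule ℝ E} {φ : E →ₗ[ℝ] ℝ}
    {v : E} (hv : v ∈ B) (hφ : φ v ≠ 0) :
    Module.finrank ℝ (B ⊓ LinearMap.ker φ : Submodule ℝ E) + 1 = Module.finrank ℝ B := by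
  have hne : φ.domRestrict B ≠ 0 := fun h => hφ (LinearMap.congr_fun h ⟨v, hv⟩)
  rw [← Module.Dual.finrank_ker_add_one_of_ne_zero hne, LinearMap.ker_domRestrict,
    ← Submodule.finrank_map_subtype_eq, Submodule.map_comap_subtype]

section Slices

variable {W : Set E} {B : Submodule ℝ E} {f : E →ᵃ[ℝ] ℝ}

lemma IsRelOpenConvex.sign_eq_of_forall_ne_zero (hW : IsRelOpenConvex W B)
    (h0 : ∀ x ∈ W, f x ≠ 0) {x y : E} (hx : x ∈ W) (hy : y ∈ W) :
    SignType.sign (f x) = SignType.sign (f y) := by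
  have himage : (f '' W).OrdConnected := (hW.convex.affine_image f).ordConnected
  have hzero : (0 : ℝ) ∉ f '' W := fun ⟨z, hz, h⟩ => h0 z hz h
  rcases lt_or_gt_of_ne (h0 x hx) with hfx | hfx <;> rcases lt_or_gt_of_ne (h0 y hy) with hfy | hfy
  · rw [sign_neg hfx, sign_neg hfy]
  · exact absurd (himage.out ⟨x, hx, rfl⟩ ⟨y, hy, rfl⟩ ⟨hfx.le, hfy.le⟩) hzero
  · exact absurd (himage.out ⟨y, hy, rfl⟩ ⟨x, hx, rfl⟩ ⟨hfy.le, hfx.le⟩) hzero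
  · rw [sign_pos hfx, sign_pos hfy]

lemma IsRelOpenConvex.exists_sign_eq (hW : IsRelOpenConvex W B) {x v : E} (hx : x ∈ W)
    (hfx : f x = 0) (hv : v ∈ B) (hfv : f.linear v ≠ 0) (s : SignType) :
    ∃ y ∈ W, SignType.sign (f y) = s := by
  obtain ⟨w, hw, hfw⟩ : ∃ w ∈ B, SignType.sign (f.linear w) = s := by
    cases s
    · exact ⟨0, B.zero_mem, by simp⟩
    · exact ⟨-f.linear v • v, B.smul_mem _ hv, by simpa [sign_eq_neg_one_iff] using hfv⟩
    · exact ⟨f.linear v • v, B.smul_mem _ hv, by simpa [sign_eq_one_iff] using hfv⟩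
  obtain ⟨ε, hεW, hε⟩ :=
    ((hW.eventually_add_smul_mem x hx w hw).and self_mem_nhdsWithin).exists
  refine ⟨x + ε • w, hεW, ?_⟩
  rw [affine_add_smul, hfx, zero_add, sign_mul, sign_pos hε, one_mul, hfw]

lemma sum_eulerChar_slice_of_forall_sign_eq {s : SignType}
    (hs : ∀ x ∈ W, SignType.sign (f x) = s) :
    ∑ s : SignType, eulerChar (W ∩ {x | SignType.sign (f x) = s})
      (B ⊓ ⨅ (_ : s = 0), LinearMap.ker f.linear) =
    eulerChar W (B ⊓ ⨅ (_ : s = 0), LinearMap.ker f.linear) := by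
  have hinter : W ∩ {x | SignType.sign (f x) = s} = W := Set.inter_eq_left.2 hs
  rw [Fintype.sum_eq_single s, hinter]
  intro s' hne
  have hempty : W ∩ {x | SignType.sign (f x) = s'} = ∅ :=
    Set.eq_empty_of_forall_notMem fun x hx => hne (hx.2.symm.trans (hs x hx.1))
  rw [hempty, eulerChar_empty]

lemma IsRelOpenConvex.sum_eulerChar_slice [FiniteDimensional ℝ E] (hW : IsRelOpenConvex W B)
    (f : E →ᵃ[ℝ] ℝ) :
    ∑ s : SignType, eulerChar (W ∩ {x | SignType.sign (f x) = s})
      (B ⊓ ⨅ (_ : s = 0), LinearMap.ker f.linear) = eulerChar W B := by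
  rcases W.eq_empty_or_nonempty with rfl | ⟨x, hx⟩
  · simp only [Set.empty_inter, eulerChar_empty, sum_const_zero]
  by_cases h0 : ∀ y ∈ W, f y ≠ 0
  · rw [sum_eulerChar_slice_of_forall_sign_eq fun y hy =>
      hW.sign_eq_of_forall_ne_zero h0 hy hx, iInf_neg (sign_ne_zero.2 (h0 x hx)), inf_top_eq]
  push Not at h0
  obtain ⟨y, hy, hfy⟩ := h0
  by_cases hker : ∃ v ∈ B, f.linear v ≠ 0
  · obtain ⟨v, hv, hfv⟩ := hker
    have hne (s : SignType) : (W ∩ {x | SignType.sign (f x) = s}).Nonempty :=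
      hW.exists_sign_eq hy hfy hv hfv s
    have hdiff : (0 : SignType) ∉ ({-1, 1} : Finset SignType) := by decide
    simp_rw [eulerChar_of_nonempty (hne _), eulerChar_of_nonempty ⟨x, hx⟩]
    rw [SignType.univ_eq, sum_insert hdiff, sum_pair (by decide), iInf_pos rfl,
      iInf_neg (by decide), iInf_neg (by decide), inf_top_eq, ← finrank_inf_ker_add_one hv hfv]
    ring
  · push Not at hker
    have hs : ∀ z ∈ W, SignType.sign (f z) = 0 := fun z hz => by
      have h := affine_linear_sub f z y
      rw [hker _ (hW.sub_mem z hz y hy), hfy, sub_zero] at h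
      rw [← h, sign_zero]
    rw [sum_eulerChar_slice_of_forall_sign_eq hs, iInf_pos rfl, inf_eq_left.2 hker]

lemma signCell_option {f : Option ι → E →ᵃ[ℝ] ℝ} {σ : Option ι → SignType} :
    signCell f σ = {x | SignType.sign (f none x) = σ none} ∩
      signCell (fun i => f (some i)) (fun i => σ (some i)) :=
  Set.ext fun _ => Option.forall

lemma signDir_option {f : Option ι → E →ᵃ[ℝ] ℝ} {σ : Option ι → SignType} :
    signDir f σ = (⨅ (_ : σ none = 0), LinearMap.ker (f none).linear) ⊓
      signDir (fun i => f (some i)) (fun i => σ (some i)) :=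
  iInf_option _

lemma IsRelOpenConvex.inter_slice (hW : IsRelOpenConvex W B) (f : E →ᵃ[ℝ] ℝ) (s : SignType) :
    IsRelOpenConvex (W ∩ {x | SignType.sign (f x) = s})
      (B ⊓ ⨅ (_ : s = 0), LinearMap.ker f.linear) := by
  simpa only [signCell, signDir, forall_const, iInf_const] using
    hW.inter_signCell (fun _ : Unit => f) fun _ => s

lemma IsRelOpenConvex.sum_eulerChar [FiniteDimensional ℝ E] [Fintype ι] [DecidableEq ι]
    (hW : IsRelOpenConvex W B) (f : ι → E →ᵃ[ℝ] ℝ) :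
    ∑ σ : ι → SignType, eulerChar (W ∩ signCell f σ) (B ⊓ signDir f σ) = eulerChar W B := by
  classical
  suffices ∀ (α : Type _) [Finite α] [Fintype α] [DecidableEq α] (W : Set E) (B : Submodule ℝ E)
      (f : α → E →ᵃ[ℝ] ℝ), IsRelOpenConvex W B →
      ∑ σ : α → SignType, eulerChar (W ∩ signCell f σ) (B ⊓ signDir f σ) = eulerChar W B from
    this ι W B f hW
  intro α _
  induction α using Finite.induction_empty_option with
  | of_equiv e ih =>
    intro _ _ W B f hW
    have := Fintype.ofEquiv _ e.symm
    rw [← ih W B (f ∘ e) hW, ← (e.arrowCongr (Equiv.refl SignType)).sum_comp]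
    refine sum_congr rfl fun σ _ => ?_
    congr 2
    · ext x
      simp [signCell, ← e.forall_congr_right]
    · ext x
      simp [mem_signDir, ← e.forall_congr_right]
  | h_empty =>
    intro _ _ W B f _
    simp [signCell, signDir]
  | h_option ih =>
    intro _ _ W B f hW
    rw [← hW.sum_eulerChar_slice (f none), ← (Equiv.piOptionEquivProd.symm).sum_comp,
      Fintype.sum_prod_type]
    refine sum_congr rfl fun s _ => ?_
    rw [← ih _ _ (fun i => f (some i)) (hW.inter_slice (f none) s)]
    refine sum_congr rfl fun σ _ => ?_
    rw [signCell_option, signDir_option, ← Set.inter_assoc, ← inf_assoc]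
    rfl

end Slices

end SignCells

section Faces

open Filter Topology

variable {𝒜}

/-- The order of the faces by inclusion of their closures. -/
instance : PartialOrder (Face 𝒜) where
  le F G := ∀ ℓ, F.sgn ℓ = 0 ∨ F.sgn ℓ = G.sgn ℓ
  le_refl _ _ := Or.inr rfl
  le_trans F G H hFG hGH ℓ := (hFG ℓ).elim Or.inl fun h => h ▸ hGH ℓ
  le_antisymm F G hFG hGF := Face.ext <| funext fun ℓ => by
    rcases hFG ℓ with h | h
    · rcases hGF ℓ with h' | h'
      · rw [h, h']
      · exact h'.symm
    · exact h

namespace Face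

lemma le_def {F G : Face 𝒜} : F ≤ G ↔ ∀ ℓ, F.sgn ℓ = 0 ∨ F.sgn ℓ = G.sgn ℓ := Iff.rfl

lemma sgn_eq_zero_of_le {F G : Face 𝒜} (h : F ≤ G) {ℓ : Idx 𝒜} (hG : G.sgn ℓ = 0) :
    F.sgn ℓ = 0 := by
  rcases h ℓ with h | h
  · exact h
  · rw [h, hG]

lemma sgn_eq_of_le {F G : Face 𝒜} (h : F ≤ G) {ℓ : Idx 𝒜} (hF : F.sgn ℓ ≠ 0) :
    F.sgn ℓ = G.sgn ℓ := (h ℓ).resolve_left hF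

/-- The face containing the point `x`. -/
def ofPoint (𝒜 : Finset (AffForm n)) (x : V n) : Face 𝒜 :=
  ⟨fun ℓ => SignType.sign (ℓ.1 x), x, fun _ => rfl⟩

lemma mem_carrier_ofPoint (𝒜 : Finset (AffForm n)) (x : V n) : x ∈ (ofPoint 𝒜 x).carrier :=
  fun _ => rfl

lemma mem_carrier_iff_ofPoint_eq {F : Face 𝒜} {x : V n} :
    x ∈ F.carrier ↔ ofPoint 𝒜 x = F :=
  ⟨fun h => Face.ext (funext h), fun h _ => h ▸ rfl⟩

/-- A chosen point of the face `F`. -/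
def point (F : Face 𝒜) : V n := F.nonempty.some

lemma point_mem (F : Face 𝒜) : F.point ∈ F.carrier := F.nonempty.some_mem

lemma sign_point (F : Face 𝒜) (ℓ : Idx 𝒜) : SignType.sign (ℓ.1 F.point) = F.sgn ℓ :=
  F.point_mem ℓ

lemma apply_eq_zero {F : Face 𝒜} {x : V n} (hx : x ∈ F.carrier) {ℓ : Idx 𝒜}
    (h : F.sgn ℓ = 0) : ℓ.1 x = 0 :=
  sign_eq_zero_iff.1 ((hx ℓ).trans h)

lemma apply_point_eq_zero {F G : Face 𝒜} (h : F ≤ G) {ℓ : Idx 𝒜} (hG : G.sgn ℓ = 0) :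
    ℓ.1 F.point = 0 :=
  apply_eq_zero F.point_mem (sgn_eq_zero_of_le h hG)

lemma eventually_add_smul_sub_mem_faceSet {F G : Face 𝒜} {x y : V n} (hx : x ∈ F.carrier)
    (hy : y ∈ G.carrier) :
    ∀ᶠ ε : ℝ in 𝓝[>] 0, x + ε • (y - x) ∈ faceSet 𝒜 (combineSgn F.sgn G.sgn) := by
  filter_upwards [eventually_sign_add_smul (fun ℓ : Idx 𝒜 => ℓ.1) x (y - x)] with ε hε ℓ
  rw [hε ℓ, funext hx]
  by_cases hF : F.sgn ℓ = 0
  · rw [combineSgn_of_eq_zero hF, combineSgn_of_eq_zero hF, affine_linear_sub,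
      apply_eq_zero hx hF, sub_zero, hy ℓ]
  · rw [combineSgn_of_ne_zero hF, combineSgn_of_ne_zero hF]

/-- The Tits product. -/
instance : Mul (Face 𝒜) where
  mul F G := ⟨combineSgn F.sgn G.sgn, _,
    (eventually_add_smul_sub_mem_faceSet F.point_mem G.point_mem).exists.choose_spec⟩

lemma mul_sgn (F G : Face 𝒜) : (F * G).sgn = combineSgn F.sgn G.sgn := rfl

lemma mul_sgn_of_eq_zero {F : Face 𝒜} (G : Face 𝒜) {ℓ : Idx 𝒜} (h : F.sgn ℓ = 0) :
    (F * G).sgn ℓ = G.sgn ℓ := combineSgn_of_eq_zero h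

lemma mul_sgn_of_ne_zero {F : Face 𝒜} (G : Face 𝒜) {ℓ : Idx 𝒜} (h : F.sgn ℓ ≠ 0) :
    (F * G).sgn ℓ = F.sgn ℓ := combineSgn_of_ne_zero h

lemma le_mul (F G : Face 𝒜) : F ≤ F * G := fun ℓ => by
  by_cases h : F.sgn ℓ = 0
  · exact Or.inl h
  · exact Or.inr (mul_sgn_of_ne_zero G h).symm

lemma mul_le_mul_left {G H : Face 𝒜} (F : Face 𝒜) (h : G ≤ H) : F * G ≤ F * H := fun ℓ => by
  by_cases hF : F.sgn ℓ = 0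
  · simpa only [mul_sgn_of_eq_zero _ hF] using h ℓ
  · simp only [mul_sgn_of_ne_zero _ hF, or_true]

lemma mul_le {F G C : Face 𝒜} (hF : F ≤ C) (hG : G ≤ C) : F * G ≤ C := fun ℓ => by
  by_cases h : F.sgn ℓ = 0
  · rw [mul_sgn_of_eq_zero G h]
    exact hG ℓ
  · rw [mul_sgn_of_ne_zero G h]
    exact hF ℓ

lemma mul_comm_of_le {F G C : Face 𝒜} (hF : F ≤ C) (hG : G ≤ C) : F * G = G * F := by
  have key : ∀ f g c : SignType, (f = 0 ∨ f = c) → (g = 0 ∨ g = c) →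
      (if f = 0 then g else f) = if g = 0 then f else g := by decide
  exact Face.ext (funext fun ℓ => key _ _ _ (hF ℓ) (hG ℓ))

/-- The space of directions of a face. -/
def dir (F : Face 𝒜) : Submodule ℝ (V n) := signDir (fun ℓ : Idx 𝒜 => ℓ.1) F.sgn

/-- The dimension of a face. -/
def dim (F : Face 𝒜) : ℕ := Module.finrank ℝ F.dir

lemma mem_dir {F : Face 𝒜} {v : V n} :
    v ∈ F.dir ↔ ∀ ℓ : Idx 𝒜, F.sgn ℓ = 0 → ℓ.1.linear v = 0 := mem_signDir

lemma dir_mono {F G : Face 𝒜} (h : ∀ ℓ, G.sgn ℓ = 0 → F.sgn ℓ = 0) : F.dir ≤ G.dir :=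
  fun _ hv => mem_dir.2 fun ℓ hℓ => mem_dir.1 hv ℓ (h ℓ hℓ)

lemma dir_le_dir {F G : Face 𝒜} (h : F ≤ G) : F.dir ≤ G.dir :=
  dir_mono fun _ => sgn_eq_zero_of_le h

lemma dir_le_ker {F : Face 𝒜} {ℓ : Idx 𝒜} (h : F.sgn ℓ = 0) :
    F.dir ≤ LinearMap.ker ℓ.1.linear := fun _ hv => mem_dir.1 hv ℓ h

lemma sub_mem_dir {F : Face 𝒜} {x y : V n} (hx : ∀ ℓ : Idx 𝒜, F.sgn ℓ = 0 → ℓ.1 x = 0)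
    (hy : ∀ ℓ : Idx 𝒜, F.sgn ℓ = 0 → ℓ.1 y = 0) : x - y ∈ F.dir :=
  mem_dir.2 fun ℓ hℓ => by rw [affine_linear_sub, hx ℓ hℓ, hy ℓ hℓ, sub_zero]

lemma eq_of_le_of_dir_eq {F G : Face 𝒜} (h : F ≤ G) (hdir : F.dir = G.dir) : F = G := by
  refine Face.ext (funext fun ℓ => (h ℓ).elim (fun h0 => ?_) id)
  have hker : ℓ.1.linear (G.point - F.point) = 0 :=
    dir_le_ker h0 (hdir ▸ sub_mem_dir (fun _ => apply_eq_zero G.point_mem)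
      fun _ => apply_point_eq_zero h)
  rw [affine_linear_sub, apply_eq_zero F.point_mem h0, sub_zero] at hker
  rw [h0, ← G.sign_point, hker, sign_zero]

/-- The orthogonal projection onto the direction space of a face. -/
def proj (F : Face 𝒜) : V n →L[ℝ] V n := F.dir.starProjection

lemma proj_mem (F : Face 𝒜) (z : V n) : F.proj z ∈ F.dir :=
  Submodule.starProjection_apply_mem _ _

lemma inner_sub_proj (F : Face 𝒜) (z : V n) {v : V n} (hv : v ∈ F.dir) :
    inner ℝ (z - F.proj z) v = 0 := Submodule.starProjection_inner_eq_zero _ _ hv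

lemma proj_congr {F G : Face 𝒜} (h : F.dir = G.dir) : F.proj = G.proj := by
  unfold proj
  congr

end Face

lemma mulT_apply (u v : Face 𝒜 → ℝ) (C : Face 𝒜) [DecidableEq (Face 𝒜)] :
    mulT 𝒜 u v C = ∑ F : Face 𝒜, ∑ G : Face 𝒜, if F * G = C then u F * v G else 0 := by
  simp only [mulT, Face.ext_iff, Face.mul_sgn]

end Faces

section Cells

variable {𝒜}

/-- The set cut out by the sign vector `τ` on the hyperplanes outside `I`. -/
def cell (I : Finset (Idx 𝒜)) (τ : Idx 𝒜 → SignType) : Set (V n) :=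
  signCell (fun i : {ℓ : Idx 𝒜 // ℓ ∉ I} => i.1.1) fun i => τ i

/-- The direction space of a nonempty `cell I τ`. -/
def cellDir (I : Finset (Idx 𝒜)) (τ : Idx 𝒜 → SignType) : Submodule ℝ (V n) :=
  signDir (fun i : {ℓ : Idx 𝒜 // ℓ ∉ I} => i.1.1) fun i => τ i

lemma mem_cell {I : Finset (Idx 𝒜)} {τ : Idx 𝒜 → SignType} {x : V n} :
    x ∈ cell I τ ↔ ∀ ℓ ∉ I, SignType.sign (ℓ.1 x) = τ ℓ := Subtype.forall

lemma mem_cellDir {I : Finset (Idx 𝒜)} {τ : Idx 𝒜 → SignType} {v : V n} :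
    v ∈ cellDir I τ ↔ ∀ ℓ ∉ I, τ ℓ = 0 → ℓ.1.linear v = 0 := mem_signDir.trans Subtype.forall

open Classical in
/-- The faces of the arrangement contained in `cell I τ`. -/
def facesIn (I : Finset (Idx 𝒜)) (τ : Idx 𝒜 → SignType) : Finset (Face 𝒜) :=
  {F | ∀ ℓ ∉ I, F.sgn ℓ = τ ℓ}

lemma mem_facesIn {I : Finset (Idx 𝒜)} {τ : Idx 𝒜 → SignType} {F : Face 𝒜} :
    F ∈ facesIn I τ ↔ ∀ ℓ ∉ I, F.sgn ℓ = τ ℓ := by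
  simp only [facesIn, mem_filter, mem_univ, true_and]

lemma IsRelOpenConvex.sum_faces {W : Set (V n)} {B : Submodule ℝ (V n)}
    (hW : IsRelOpenConvex W B) :
    ∑ F : Face 𝒜, eulerChar (W ∩ F.carrier) (B ⊓ F.dir) = eulerChar W B := by
  classical
  rw [← hW.sum_eulerChar fun ℓ : Idx 𝒜 => ℓ.1]
  refine sum_of_injOn Face.sgn (fun F _ G _ h => Face.ext h) (by simp) ?_ fun _ _ => rfl
  intro σ _ hσ
  have hempty : signCell (fun ℓ : Idx 𝒜 => ℓ.1) σ = ∅ :=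
    Set.not_nonempty_iff_eq_empty.1 fun h => hσ ⟨⟨σ, h⟩, mem_univ _, rfl⟩
  rw [hempty, Set.inter_empty, eulerChar_empty]

lemma sum_facesIn_eulerChar {U : Set (V n)} (hU : IsOpen U) (hconv : Convex ℝ U)
    (I : Finset (Idx 𝒜)) (τ : Idx 𝒜 → SignType) :
    ∑ F ∈ facesIn I τ, eulerChar (U ∩ F.carrier) F.dir =
      eulerChar (U ∩ cell I τ) (cellDir I τ) := by
  have hW : IsRelOpenConvex (U ∩ cell I τ) (cellDir I τ) := by
    have hcell := (isRelOpenConvex_top hU hconv).inter_signCell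
      (fun i : {ℓ : Idx 𝒜 // ℓ ∉ I} => i.1.1) fun i => τ i
    rwa [top_inf_eq] at hcell
  classical
  rw [← hW.sum_faces (𝒜 := 𝒜)]
  refine sum_subset_zero_on_sdiff (subset_univ _) (fun F hF => ?_) fun F hF => ?_
  · have hempty : U ∩ cell I τ ∩ F.carrier = ∅ := by
      refine Set.eq_empty_of_forall_notMem fun x hx => (mem_sdiff.1 hF).2 ?_
      exact mem_facesIn.2 fun ℓ hℓ => (hx.2 ℓ).symm.trans (mem_cell.1 hx.1.2 ℓ hℓ)
    rw [hempty, eulerChar_empty]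
  · rw [mem_facesIn] at hF
    have hsub : F.carrier ⊆ cell I τ := fun x hx =>
      mem_cell.2 fun ℓ hℓ => (hx ℓ).trans (hF ℓ hℓ)
    have hdir : F.dir ≤ cellDir I τ := fun v hv =>
      mem_cellDir.2 fun ℓ hℓ h0 => Face.mem_dir.1 hv ℓ ((hF ℓ hℓ).trans h0)
    rw [Set.inter_assoc, Set.inter_eq_right.2 hsub, inf_eq_right.2 hdir]

open Classical in
lemma sum_facesIn_disjoint {U : Set (V n)} (hU : IsOpen U) (hconv : Convex ℝ U)
    (I : Finset (Idx 𝒜)) (τ : Idx 𝒜 → SignType) :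
    ∑ F ∈ facesIn I τ with Disjoint U F.carrier, (-1 : ℝ) ^ F.dim =
      if (cell I τ).Nonempty ∧ Disjoint U (cell I τ)
        then (-1) ^ Module.finrank ℝ (cellDir I τ) else 0 := by
  have hterm (F : Face 𝒜) : (if Disjoint U F.carrier then (-1 : ℝ) ^ F.dim else 0) =
      eulerChar (Set.univ ∩ F.carrier) F.dir - eulerChar (U ∩ F.carrier) F.dir := by
    rw [Set.univ_inter, eulerChar_of_nonempty ⟨_, F.point_mem⟩, eulerChar,
      Set.disjoint_iff_inter_eq_empty, ← Set.not_nonempty_iff_eq_empty, Face.dim]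
    split_ifs <;> simp
  rw [sum_filter, sum_congr rfl fun F _ => hterm F, sum_sub_distrib,
    sum_facesIn_eulerChar isOpen_univ convex_univ, sum_facesIn_eulerChar hU hconv,
    Set.univ_inter, Set.disjoint_iff_inter_eq_empty, ← Set.not_nonempty_iff_eq_empty]
  by_cases hne : (U ∩ cell I τ).Nonempty
  · rw [eulerChar_of_nonempty hne, eulerChar_of_nonempty hne.right, sub_self, if_neg]
    exact fun h => h.2 hne
  · simp only [eulerChar, hne, if_false, not_false_eq_true, and_true, sub_zero]

open Classical in
/-- The sign vector obtained from `τ` by negating the coordinates in `T`. -/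
def flipSgn (T : Finset (Idx 𝒜)) (τ : Idx 𝒜 → SignType) : Idx 𝒜 → SignType :=
  fun ℓ => if ℓ ∈ T then -τ ℓ else τ ℓ

lemma flipSgn_of_mem {T : Finset (Idx 𝒜)} {τ : Idx 𝒜 → SignType} {ℓ : Idx 𝒜} (h : ℓ ∈ T) :
    flipSgn T τ ℓ = -τ ℓ := if_pos h

lemma flipSgn_of_notMem {T : Finset (Idx 𝒜)} {τ : Idx 𝒜 → SignType} {ℓ : Idx 𝒜} (h : ℓ ∉ T) :
    flipSgn T τ ℓ = τ ℓ := if_neg h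

open Classical in
lemma mem_facesIn_sdiff_flipSgn {I T : Finset (Idx 𝒜)} {τ : Idx 𝒜 → SignType} (hT : T ⊆ I)
    {F : Face 𝒜} :
    F ∈ facesIn (I \ T) (flipSgn T τ) ↔ (∀ ℓ ∈ T, F.sgn ℓ = -τ ℓ) ∧ F ∈ facesIn I τ := by
  simp only [mem_facesIn, mem_sdiff]
  constructor
  · refine fun h => ⟨fun ℓ hℓ => ?_, fun ℓ hℓ => ?_⟩
    · rw [h ℓ fun h' => h'.2 hℓ, flipSgn_of_mem hℓ]
    · rw [h ℓ fun h' => hℓ h'.1, flipSgn_of_notMem fun hℓT => hℓ (hT hℓT)]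
  · rintro ⟨hFT, hFI⟩ ℓ hℓ
    by_cases hℓT : ℓ ∈ T
    · rw [hFT ℓ hℓT, flipSgn_of_mem hℓT]
    · rw [hFI ℓ fun hI => hℓ ⟨hI, hℓT⟩, flipSgn_of_notMem hℓT]

open Classical in
lemma sum_facesIn_ne_neg_disjoint {U : Set (V n)} (hU : IsOpen U) (hconv : Convex ℝ U)
    {I : Finset (Idx 𝒜)} {τ : Idx 𝒜 → SignType} {x : V n} (hxU : x ∈ U)
    (hx : x ∈ cell I τ) (hneg : ∀ ℓ ∈ I, SignType.sign (ℓ.1 x) = -τ ℓ) :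
    ∑ F ∈ facesIn I τ with (∀ ℓ ∈ I, F.sgn ℓ ≠ -τ ℓ) ∧ Disjoint U F.carrier,
      (-1 : ℝ) ^ F.dim = 0 := by
  set S : Idx 𝒜 → Finset (Face 𝒜) := fun ℓ => {F | F.sgn ℓ = -τ ℓ}
  have hfilter : ∑ F ∈ facesIn I τ with (∀ ℓ ∈ I, F.sgn ℓ ≠ -τ ℓ) ∧ Disjoint U F.carrier,
      (-1 : ℝ) ^ F.dim = ∑ F ∈ I.inf fun ℓ => (S ℓ)ᶜ,
        if F ∈ facesIn I τ ∧ Disjoint U F.carrier then (-1 : ℝ) ^ F.dim else 0 := by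
    rw [← sum_filter]
    refine sum_congr (ext fun F => ?_) fun _ _ => rfl
    simp only [mem_filter, mem_inf, mem_compl, S, mem_univ, true_and]
    tauto
  -- In each term the cell obtained by reversing the signs in `T` contains `x`, so it meets `U`.
  rw [hfilter, inclusion_exclusion_sum_inf_compl]
  refine sum_eq_zero fun T hT => ?_
  have hTI := mem_powerset.1 hT
  have hxT : x ∈ cell (I \ T) (flipSgn T τ) := mem_cell.2 fun ℓ hℓ => by
    by_cases hℓT : ℓ ∈ T
    · rw [hneg ℓ (hTI hℓT), flipSgn_of_mem hℓT]
    · rw [mem_cell.1 hx ℓ fun hI => hℓ (mem_sdiff.2 ⟨hI, hℓT⟩), flipSgn_of_notMem hℓT]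
  have hzero := sum_facesIn_disjoint hU hconv (I \ T) (flipSgn T τ)
  rw [if_neg fun h => Set.disjoint_left.1 h.2 hxU hxT] at hzero
  have hfaces : {F ∈ T.inf S | F ∈ facesIn I τ ∧ Disjoint U F.carrier} =
      {F ∈ facesIn (I \ T) (flipSgn T τ) | Disjoint U F.carrier} := by
    ext F
    simp only [mem_filter, mem_inf, S, mem_univ, true_and, mem_facesIn_sdiff_flipSgn hTI, and_assoc]
  rw [← sum_filter, hfaces, hzero, smul_zero]

end Cells

section Cones

open Filter Topology

variable {𝒜}

/-- The open half-space of the points beyond `p` in the direction `m`. -/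
def openHalfspace (m p : V n) : Set (V n) := {x | inner ℝ m p < inner ℝ m x}

lemma mem_openHalfspace {m p x : V n} : x ∈ openHalfspace m p ↔ 0 < inner ℝ m (x - p) := by
  rw [inner_sub_right, sub_pos]
  rfl

lemma isOpen_openHalfspace (m p : V n) : IsOpen (openHalfspace m p) :=
  isOpen_lt (by fun_prop) (by fun_prop)

lemma convex_openHalfspace (m p : V n) : Convex ℝ (openHalfspace m p) :=
  convex_halfSpace_gt (innerₛₗ ℝ m).isLinear _

/-- The directions pointing from the face `H` into the relatively open face `D`. -/
def tangentCone (H D : Face 𝒜) : Set (V n) :=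
  {v | ∀ ℓ : Idx 𝒜, H.sgn ℓ = 0 → SignType.sign (ℓ.1.linear v) = D.sgn ℓ}

/-- The normal cone at the face `H` of the closure of the face `D`. -/
def normalCone (H D : Face 𝒜) : Set (V n) := {m | ∀ v ∈ tangentCone H D, inner ℝ m v ≤ 0}

/-- The directions, up to `H.dir`, of the rays that stay inside the face `H`. -/
def strictRecCone (H : Face 𝒜) : Set (V n) :=
  {w | ∀ ℓ : Idx 𝒜, ¬ H.dir ≤ LinearMap.ker ℓ.1.linear →
    SignType.sign (ℓ.1.linear w) = H.sgn ℓ}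

/-- The cone of the directions `z` such that far away along `z` the nearest point of the closure
of `D` lies in the face `H`. -/
def limitCone (H D : Face 𝒜) : Set (V n) :=
  {z | H.proj z ∈ strictRecCone H ∧ z - H.proj z ∈ normalCone H D}

/-- The directions whose projection to `K.dir` points from `F` into `K` and whose orthogonal part
is normal to `C` at `K`. -/
def mixedCone (F K C : Face 𝒜) : Set (V n) :=
  {z | K.proj z ∈ tangentCone F K ∧ z - K.proj z ∈ normalCone K C}

/-- General position with respect to the direction spaces of the faces. -/
structure IsGeneric (𝒜 : Finset (AffForm n)) (z : V n) : Prop where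
  linear_proj_ne_zero : ∀ (F : Face 𝒜) (ℓ : Idx 𝒜), ¬ F.dir ≤ LinearMap.ker ℓ.1.linear →
    ℓ.1.linear (F.proj z) ≠ 0
  sub_proj_notMem_orthogonal : ∀ F G : Face 𝒜, ¬ G.dir ≤ F.dir → z - F.proj z ∉ G.dirᗮ

lemma mem_limitCone {H D : Face 𝒜} {z : V n} :
    z ∈ limitCone H D ↔ H.proj z ∈ strictRecCone H ∧ z - H.proj z ∈ normalCone H D := Iff.rfl

lemma sub_mem_tangentCone {H D : Face 𝒜} {p x : V n} (hp : p ∈ H.carrier)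
    (hx : x ∈ D.carrier) : x - p ∈ tangentCone H D := fun ℓ hℓ => by
  rw [affine_linear_sub, Face.apply_eq_zero hp hℓ, sub_zero, hx ℓ]

lemma add_mem_tangentCone {H D : Face 𝒜} {v w : V n} (hv : v ∈ tangentCone H D)
    (hw : w ∈ H.dir) : v + w ∈ tangentCone H D := fun ℓ hℓ => by
  rw [map_add, Face.mem_dir.1 hw ℓ hℓ, add_zero, hv ℓ hℓ]

lemma mem_orthogonal_of_mem_normalCone {H D : Face 𝒜} {m : V n} (hm : m ∈ normalCone H D) :
    m ∈ H.dirᗮ := by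
  refine (Submodule.mem_orthogonal' _ _).2 fun w hw => ?_
  by_contra hne
  have hv : D.point - H.point ∈ tangentCone H D :=
    sub_mem_tangentCone H.point_mem D.point_mem
  have hle := hm _ (add_mem_tangentCone hv
    (H.dir.smul_mem ((1 - inner ℝ m (D.point - H.point)) / inner ℝ m w) hw))
  rw [inner_add_right, inner_smul_right, div_mul_cancel₀ _ hne] at hle
  linarith

lemma mem_normalCone_iff_disjoint {H D : Face 𝒜} (h : H ≤ D) {m p : V n}
    (hp : p ∈ H.carrier) :
    m ∈ normalCone H D ↔ Disjoint (openHalfspace m p) D.carrier := by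
  refine ⟨fun hm => Set.disjoint_right.2 fun x hx hxU =>
    (mem_openHalfspace.1 hxU).not_ge (hm _ (sub_mem_tangentCone hp hx)), fun hdisj v hv => ?_⟩
  obtain ⟨ε, hsign, hε⟩ := ((eventually_sign_add_smul (fun ℓ : Idx 𝒜 => ℓ.1) p v).and
    self_mem_nhdsWithin).exists
  have hmem : p + ε • v ∈ D.carrier := fun ℓ => by
    rw [hsign ℓ, funext hp]
    by_cases hℓ : H.sgn ℓ = 0
    · rw [combineSgn_of_eq_zero hℓ, hv ℓ hℓ]
    · rw [combineSgn_of_ne_zero hℓ, Face.sgn_eq_of_le h hℓ]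
  have hle := not_lt.1 fun hlt =>
    Set.disjoint_left.1 hdisj (mem_openHalfspace (p := p).2 hlt) hmem
  rw [add_sub_cancel_left, inner_smul_right] at hle
  exact nonpos_of_mul_nonpos_right hle hε

lemma not_dir_le_ker {G K : Face 𝒜} (h : G ≤ K) {ℓ : Idx 𝒜} (hG : G.sgn ℓ = 0)
    (hK : K.sgn ℓ ≠ 0) : ¬ K.dir ≤ LinearMap.ker ℓ.1.linear := fun hle => by
  have hmem : K.point - G.point ∈ K.dir :=
    Face.sub_mem_dir (fun _ => Face.apply_eq_zero K.point_mem) fun _ =>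
      Face.apply_point_eq_zero h
  have hzero : ℓ.1.linear (K.point - G.point) = 0 := hle hmem
  rw [affine_linear_sub, Face.apply_eq_zero G.point_mem hG, sub_zero, ← sign_eq_zero_iff,
    K.sign_point] at hzero
  exact hK hzero

lemma inner_sub_proj_proj_sub_proj_pos {z : V n} (hz : IsGeneric 𝒜 z) {G K : Face 𝒜}
    (h : G < K) : 0 < inner ℝ (z - G.proj z) (K.proj z - G.proj z) := by
  have hmem : K.proj z - G.proj z ∈ K.dir :=
    K.dir.sub_mem (K.proj_mem z) (Face.dir_le_dir h.le (G.proj_mem z))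
  have hsplit : z - G.proj z = (z - K.proj z) + (K.proj z - G.proj z) := by abel
  rw [hsplit, inner_add_left, K.inner_sub_proj z hmem, zero_add, real_inner_self_eq_norm_sq]
  refine pow_pos (norm_pos_iff.2 fun hzero => ?_) 2
  refine hz.sub_proj_notMem_orthogonal G K (fun hle => h.ne ?_) ?_
  · exact Face.eq_of_le_of_dir_eq h.le (le_antisymm (Face.dir_le_dir h.le) hle)
  · rw [← sub_eq_zero.1 hzero]
    exact K.dir.sub_starProjection_mem_orthogonal z

/-- The hyperplanes through `G` but not through `K` which `z`, projected to `K.dir`, leaves on the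
side of `K`. -/
def visibleForms (G K : Face 𝒜) (z : V n) : Finset (Idx 𝒜) :=
  {ℓ | G.sgn ℓ = 0 ∧ K.sgn ℓ ≠ 0 ∧ SignType.sign (ℓ.1.linear (K.proj z)) = K.sgn ℓ}

lemma mem_visibleForms {G K : Face 𝒜} {z : V n} {ℓ : Idx 𝒜} :
    ℓ ∈ visibleForms G K z ↔ G.sgn ℓ = 0 ∧ K.sgn ℓ ≠ 0 ∧
      SignType.sign (ℓ.1.linear (K.proj z)) = K.sgn ℓ := by
  simp only [visibleForms, mem_filter, mem_univ, true_and]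

lemma proj_mem_tangentCone_iff {G F K : Face 𝒜} (hGK : G ≤ K) {z : V n} :
    G ≤ F ∧ F ≤ K ∧ K.proj z ∈ tangentCone F K ↔
      F ∈ facesIn (visibleForms G K z) K.sgn ∧
        ∀ ℓ ∈ visibleForms G K z, F.sgn ℓ ≠ -K.sgn ℓ := by
  have key : ∀ g f k s : SignType, (g = 0 ∨ g = k) → (k = 0 → s = k) →
      ((g = 0 ∨ g = f) ∧ (f = 0 ∨ f = k) ∧ (f = 0 → s = k) ↔
        (¬(g = 0 ∧ k ≠ 0 ∧ s = k) → f = k) ∧ (g = 0 ∧ k ≠ 0 ∧ s = k → f ≠ -k)) := by decide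
  simp only [mem_facesIn, mem_visibleForms, Face.le_def, tangentCone, Set.mem_ofPred_eq,
    ← forall_and]
  exact forall_congr' fun ℓ => key _ _ _ _ (hGK ℓ) fun h => by
    rw [Face.mem_dir.1 (K.proj_mem z) ℓ h, sign_zero, h]

open Classical in
lemma sum_neg_one_pow_dim_eq_zero {z : V n} (hz : IsGeneric 𝒜 z) {G K : Face 𝒜} (h : G < K) :
    ∑ F : Face 𝒜 with (G ≤ F ∧ F ≤ K ∧ K.proj z ∈ tangentCone F K) ∧
      -(z - G.proj z) ∈ normalCone G F, (-1 : ℝ) ^ F.dim = 0 := by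
  set U := openHalfspace (-(z - G.proj z)) G.point
  obtain ⟨ε, hsign, hε⟩ := ((eventually_sign_add_smul (fun ℓ : Idx 𝒜 => ℓ.1) G.point
    (-(K.proj z - G.proj z))).and self_mem_nhdsWithin).exists
  set x := G.point + ε • -(K.proj z - G.proj z)
  have hxU : x ∈ U := by
    rw [mem_openHalfspace, add_sub_cancel_left, inner_smul_right, inner_neg_neg]
    exact mul_pos hε (inner_sub_proj_proj_sub_proj_pos hz h)
  have hx_of_ne {ℓ : Idx 𝒜} (hG : G.sgn ℓ ≠ 0) : SignType.sign (ℓ.1 x) = K.sgn ℓ := by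
    rw [hsign ℓ, funext G.sign_point, combineSgn_of_ne_zero hG, Face.sgn_eq_of_le h.le hG]
  have hx_of_eq {ℓ : Idx 𝒜} (hG : G.sgn ℓ = 0) :
      SignType.sign (ℓ.1 x) = -SignType.sign (ℓ.1.linear (K.proj z)) := by
    rw [hsign ℓ, funext G.sign_point, combineSgn_of_eq_zero hG, map_neg, map_sub,
      Face.mem_dir.1 (G.proj_mem z) ℓ hG, sub_zero, Left.sign_neg]
  have hx : x ∈ cell (visibleForms G K z) K.sgn := mem_cell.2 fun ℓ hℓ => by
    by_cases hG : G.sgn ℓ = 0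
    · rw [hx_of_eq hG]
      by_cases hK : K.sgn ℓ = 0
      · rw [Face.mem_dir.1 (K.proj_mem z) ℓ hK, sign_zero, hK, neg_zero]
      · have hne := sign_ne_zero.2 (hz.linear_proj_ne_zero K ℓ (not_dir_le_ker h.le hG hK))
        have hopp : ∀ s t : SignType, s ≠ 0 → t ≠ 0 → s ≠ t → -s = t := by decide
        exact hopp _ _ hne hK fun hs => hℓ (mem_visibleForms.2 ⟨hG, hK, hs⟩)
    · exact hx_of_ne hG
  rw [← sum_facesIn_ne_neg_disjoint (isOpen_openHalfspace _ _) (convex_openHalfspace _ _) hxU hx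
    fun ℓ hℓ => by rw [hx_of_eq (mem_visibleForms.1 hℓ).1, (mem_visibleForms.1 hℓ).2.2]]
  refine sum_congr (ext fun F => ?_) fun _ _ => rfl
  simp only [mem_filter, mem_univ, true_and, ← and_assoc, ← proj_mem_tangentCone_iff h.le]
  exact and_congr_right fun hF => mem_normalCone_iff_disjoint hF.1.1 G.point_mem

end Cones

section Localization

open Filter Topology

variable {𝒜}

/-- The hyperplanes through `H` that do not contain `F`. -/
def separatingForms (F H : Face 𝒜) : Finset (Idx 𝒜) := {ℓ | H.sgn ℓ = 0 ∧ F.sgn ℓ ≠ 0}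

lemma mem_separatingForms {F H : Face 𝒜} {ℓ : Idx 𝒜} :
    ℓ ∈ separatingForms F H ↔ H.sgn ℓ = 0 ∧ F.sgn ℓ ≠ 0 := by
  simp only [separatingForms, mem_filter, mem_univ, true_and]

lemma mul_eq_and_le_iff {F H C D : Face 𝒜} (h : F * H ≤ C) :
    F * D = C ∧ H ≤ D ↔ D ∈ facesIn (separatingForms F H) (H * C).sgn := by
  have key : ∀ f h c d : SignType,
      ((if f = 0 then h else f) = 0 ∨ (if f = 0 then h else f) = c) →
      ((if f = 0 then d else f) = c ∧ (h = 0 ∨ h = d) ↔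
        (¬(h = 0 ∧ f ≠ 0) → d = if h = 0 then c else h)) := by decide
  rw [mem_facesIn, Face.le_def, Face.ext_iff, funext_iff, ← forall_and]
  exact forall_congr' fun ℓ => by
    rw [mem_separatingForms]
    exact key _ _ _ _ (h ℓ)

lemma mul_le_of_mul_eq {F H C D : Face 𝒜} (hFD : F * D = C) (hHD : H ≤ D) : F * H ≤ C :=
  hFD ▸ Face.mul_le_mul_left F hHD

lemma cellDir_separatingForms {F H C : Face 𝒜} (h : F * H ≤ C) :
    cellDir (separatingForms F H) (H * C).sgn = C.dir := by
  have key : ∀ f h c : SignType,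
      ((if f = 0 then h else f) = 0 ∨ (if f = 0 then h else f) = c) →
      (¬(h = 0 ∧ f ≠ 0) ∧ (if h = 0 then c else h) = 0 ↔ c = 0) := by decide
  ext v
  rw [mem_cellDir, Face.mem_dir]
  refine forall_congr' fun ℓ => ?_
  rw [mem_separatingForms, ← and_imp]
  exact imp_congr_left (key _ _ _ (h ℓ))

lemma sgn_eq_zero_of_mul_sgn_eq_zero {F H : Face 𝒜} {ℓ : Idx 𝒜} (h : (F * H).sgn ℓ = 0) :
    F.sgn ℓ = 0 ∧ H.sgn ℓ = 0 := by
  have hF := Face.sgn_eq_zero_of_le (Face.le_mul F H) h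
  exact ⟨hF, by rwa [← Face.mul_sgn_of_eq_zero H hF]⟩

lemma disjoint_cell_separatingForms_iff {F H C : Face 𝒜} {m : V n} :
    Disjoint (openHalfspace m H.point) (cell (separatingForms F H) (H * C).sgn) ↔
      m ∈ normalCone (F * H) C := by
  refine ⟨fun hdisj v hv => ?_, fun hm => Set.disjoint_right.2 fun x hx hxU => ?_⟩
  · obtain ⟨ε, hsign, hε⟩ := ((eventually_sign_add_smul (fun ℓ : Idx 𝒜 => ℓ.1) H.point v).and
      self_mem_nhdsWithin).exists
    have hmem : H.point + ε • v ∈ cell (separatingForms F H) (H * C).sgn :=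
      mem_cell.2 fun ℓ hℓ => by
        rw [hsign ℓ, funext H.sign_point, Face.mul_sgn]
        by_cases hH : H.sgn ℓ = 0
        · have hF : F.sgn ℓ = 0 := by_contra fun hF => hℓ (mem_separatingForms.2 ⟨hH, hF⟩)
          rw [combineSgn_of_eq_zero hH, combineSgn_of_eq_zero hH,
            hv ℓ (by rwa [Face.mul_sgn_of_eq_zero H hF])]
        · rw [combineSgn_of_ne_zero hH, combineSgn_of_ne_zero hH]
    have hle := not_lt.1 fun hlt =>
      Set.disjoint_left.1 hdisj (mem_openHalfspace (p := H.point).2 hlt) hmem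
    rw [add_sub_cancel_left, inner_smul_right] at hle
    exact nonpos_of_mul_nonpos_right hle hε
  · refine (mem_openHalfspace.1 hxU).not_ge (hm _ fun ℓ hℓ => ?_)
    obtain ⟨hF, hH⟩ := sgn_eq_zero_of_mul_sgn_eq_zero hℓ
    rw [affine_linear_sub, Face.apply_eq_zero H.point_mem hH, sub_zero,
      mem_cell.1 hx ℓ fun hmem => (mem_separatingForms.1 hmem).2 hF, Face.mul_sgn_of_eq_zero C hH]

lemma mem_normalCone_mul_iff {z : V n} (hz : IsGeneric 𝒜 z) {F H C : Face 𝒜}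
    (hrec : H.proj z ∈ strictRecCone H) :
    z - H.proj z ∈ normalCone (F * H) C ↔
      (F * H).dir = H.dir ∧ z ∈ mixedCone F (F * H) C := by
  refine ⟨fun hm => ?_, fun ⟨hdir, _, hm⟩ => by rwa [Face.proj_congr hdir] at hm⟩
  have hdir : (F * H).dir = H.dir := by
    refine le_antisymm (not_not.1 fun hle => ?_) ?_
    · exact hz.sub_proj_notMem_orthogonal H (F * H) hle (mem_orthogonal_of_mem_normalCone hm)
    · exact Face.dir_mono fun ℓ hℓ => (sgn_eq_zero_of_mul_sgn_eq_zero hℓ).2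
  refine ⟨hdir, fun ℓ hF => ?_, by rwa [Face.proj_congr hdir]⟩
  by_cases h0 : (F * H).sgn ℓ = 0
  · rw [Face.mem_dir.1 ((F * H).proj_mem z) ℓ h0, sign_zero, h0]
  · rw [Face.proj_congr hdir, Face.mul_sgn_of_eq_zero H hF]
    exact hrec ℓ (hdir ▸ not_dir_le_ker (Face.le_mul F H) hF h0)

open Classical in
lemma sum_mul_eq_neg_one_pow_dim {z : V n} (hz : IsGeneric 𝒜 z) (F : Face 𝒜) {H : Face 𝒜}
    (C : Face 𝒜) (hrec : H.proj z ∈ strictRecCone H) :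
    ∑ D : Face 𝒜 with F * D = C ∧ H ≤ D ∧ z - H.proj z ∈ normalCone H D, (-1 : ℝ) ^ D.dim =
      if F * H ≤ C ∧ (F * H).dir = H.dir ∧ z ∈ mixedCone F (F * H) C then (-1) ^ C.dim else 0 := by
  by_cases hle : F * H ≤ C
  · have hsum := sum_facesIn_disjoint (isOpen_openHalfspace (z - H.proj z) H.point)
      (convex_openHalfspace _ _) (separatingForms F H) (H * C).sgn
    have hne : (cell (separatingForms F H) (H * C).sgn).Nonempty :=
      ⟨(H * C).point, mem_cell.2 fun ℓ _ => (H * C).sign_point ℓ⟩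
    rw [cellDir_separatingForms hle] at hsum
    simp only [hne, disjoint_cell_separatingForms_iff, mem_normalCone_mul_iff hz hrec,
      true_and] at hsum
    simp only [hle, true_and]
    refine Eq.trans (sum_congr (ext fun D => ?_) fun _ _ => rfl) hsum
    rw [mem_filter, mem_filter, ← mul_eq_and_le_iff hle, and_assoc]
    simp only [mem_univ, true_and]
    exact and_congr_right fun _ => and_congr_right fun h =>
      mem_normalCone_iff_disjoint h H.point_mem
  · rw [if_neg fun h => hle h.1, filter_false_of_mem fun D _ h => hle (mul_le_of_mul_eq h.1 h.2.1),
      sum_empty]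

lemma exists_mul_eq_of_proj_mem_tangentCone {z : V n} (hz : IsGeneric 𝒜 z) {F K : Face 𝒜}
    (hFK : F ≤ K) (htan : K.proj z ∈ tangentCone F K) :
    ∃ H : Face 𝒜, F * H = K ∧ H.dir = K.dir ∧ H.proj z ∈ strictRecCone H := by
  obtain ⟨r, hr⟩ := (eventually_sign_add_smul_atTop (fun ℓ : Idx 𝒜 => ℓ.1) K.point
    (K.proj z)).exists
  set H := Face.ofPoint 𝒜 (K.point + r • K.proj z)
  have hH_of_eq {ℓ : Idx 𝒜} (h : SignType.sign (ℓ.1.linear (K.proj z)) = 0) :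
      H.sgn ℓ = K.sgn ℓ :=
    (hr ℓ).trans ((if_pos h).trans (K.sign_point ℓ))
  have hH_of_ne {ℓ : Idx 𝒜} (h : SignType.sign (ℓ.1.linear (K.proj z)) ≠ 0) :
      H.sgn ℓ = SignType.sign (ℓ.1.linear (K.proj z)) :=
    (hr ℓ).trans (if_neg h)
  have hdir : H.dir = K.dir := by
    refine le_antisymm (Face.dir_mono fun ℓ hK => ?_) (Face.dir_mono fun ℓ hℓ => ?_)
    · rw [hH_of_eq, hK]
      rw [Face.mem_dir.1 (K.proj_mem z) ℓ hK, sign_zero]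
    · have hlin : SignType.sign (ℓ.1.linear (K.proj z)) = 0 :=
        by_contra fun hlin => hlin ((hH_of_ne hlin).symm.trans hℓ)
      rw [← hH_of_eq hlin, hℓ]
  refine ⟨H, Face.ext (funext fun ℓ => ?_), hdir, fun ℓ hℓ => ?_⟩
  · by_cases hF : F.sgn ℓ = 0
    · rw [Face.mul_sgn_of_eq_zero H hF]
      by_cases hlin : SignType.sign (ℓ.1.linear (K.proj z)) = 0
      · exact hH_of_eq hlin
      · rw [hH_of_ne hlin, htan ℓ hF]
    · rw [Face.mul_sgn_of_ne_zero H hF, Face.sgn_eq_of_le hFK hF]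
  · rw [Face.proj_congr hdir, hH_of_ne]
    exact sign_ne_zero.2 (hz.linear_proj_ne_zero K ℓ (hdir ▸ hℓ))

lemma eq_of_mul_eq_of_proj_mem_strictRecCone {z : V n} {F K H H' : Face 𝒜}
    (hFH : F * H = K) (hdir : H.dir = K.dir) (hrec : H.proj z ∈ strictRecCone H)
    (hFH' : F * H' = K) (hdir' : H'.dir = K.dir) (hrec' : H'.proj z ∈ strictRecCone H') :
    H = H' := by
  refine Face.ext (funext fun ℓ => ?_)
  by_cases hker : K.dir ≤ LinearMap.ker ℓ.1.linear
  · have hmem : H.point - H'.point ∈ K.dir := Face.sub_mem_dir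
      (fun ℓ hK => Face.apply_eq_zero H.point_mem
        (sgn_eq_zero_of_mul_sgn_eq_zero (F := F) (by rwa [hFH])).2)
      fun ℓ hK => Face.apply_eq_zero H'.point_mem
        (sgn_eq_zero_of_mul_sgn_eq_zero (F := F) (by rwa [hFH'])).2
    have hzero : ℓ.1.linear (H.point - H'.point) = 0 := hker hmem
    rw [affine_linear_sub, sub_eq_zero] at hzero
    rw [← H.sign_point, ← H'.sign_point, hzero]
  · rw [← hrec ℓ (hdir ▸ hker), ← hrec' ℓ (hdir' ▸ hker), Face.proj_congr hdir,
      Face.proj_congr hdir']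

open Classical in
lemma sum_strictRecCone_eq_sum_mixedCone {z : V n} (hz : IsGeneric 𝒜 z) (F C : Face 𝒜)
    (w : ℕ → ℝ) :
    ∑ H : Face 𝒜 with H.proj z ∈ strictRecCone H ∧ F * H ≤ C ∧ (F * H).dir = H.dir ∧
        z ∈ mixedCone F (F * H) C, w H.dim =
      ∑ K : Face 𝒜 with F ≤ K ∧ K ≤ C ∧ z ∈ mixedCone F K C, w K.dim := by
  refine sum_nbij (F * ·) (fun H hH => ?_) (fun H hH H' hH' heq => ?_) (fun K hK => ?_)
    fun H hH => ?_
  · obtain ⟨-, -, hle, -, hmix⟩ := mem_filter.1 hH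
    exact mem_filter.2 ⟨mem_univ _, Face.le_mul F H, hle, hmix⟩
  · obtain ⟨-, hrec, -, hdir, -⟩ := mem_filter.1 hH
    obtain ⟨-, hrec', -, hdir', -⟩ := mem_filter.1 hH'
    exact eq_of_mul_eq_of_proj_mem_strictRecCone rfl hdir.symm hrec heq.symm
      (hdir'.symm.trans (congrArg Face.dir heq.symm)) hrec'
  · obtain ⟨-, hFK, hKC, hmix⟩ := mem_filter.1 hK
    obtain ⟨H, rfl, hdir, hrec⟩ := exists_mul_eq_of_proj_mem_tangentCone hz hFK hmix.1
    exact ⟨H, mem_filter.2 ⟨mem_univ _, hrec, hKC, hdir.symm, hmix⟩, rfl⟩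
  · obtain ⟨-, -, -, hdir, -⟩ := mem_filter.1 hH
    rw [Face.dim, Face.dim, hdir]

open Classical in
lemma sum_mul_eq_limitCone {z : V n} (hz : IsGeneric 𝒜 z) (F C : Face 𝒜) (w : ℕ → ℝ) :
    ∑ D : Face 𝒜 with F * D = C, ∑ H : Face 𝒜 with H ≤ D ∧ z ∈ limitCone H D,
        (-1) ^ D.dim * w H.dim =
      (-1) ^ C.dim * ∑ K : Face 𝒜 with F ≤ K ∧ K ≤ C ∧ z ∈ mixedCone F K C, w K.dim := by
  calc
    _ = ∑ H : Face 𝒜 with H.proj z ∈ strictRecCone H,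
          w H.dim * ∑ D : Face 𝒜 with F * D = C ∧ H ≤ D ∧ z - H.proj z ∈ normalCone H D,
            (-1) ^ D.dim := by
      simp only [mul_sum]
      rw [sum_comm' (t' := {H : Face 𝒜 | H.proj z ∈ strictRecCone H})
        (s' := fun H => {D | F * D = C ∧ H ≤ D ∧ z - H.proj z ∈ normalCone H D})]
      · exact sum_congr rfl fun _ _ => sum_congr rfl fun _ _ => mul_comm _ _
      · simp only [mem_filter, mem_univ, true_and, mem_limitCone]
        tauto
    _ = (-1) ^ C.dim * ∑ H : Face 𝒜 with H.proj z ∈ strictRecCone H ∧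
          F * H ≤ C ∧ (F * H).dir = H.dir ∧ z ∈ mixedCone F (F * H) C, w H.dim := by
      rw [mul_sum, ← filter_filter]
      refine (sum_congr rfl fun H hH => ?_).trans (sum_filter _ _).symm
      rw [sum_mul_eq_neg_one_pow_dim hz F C (mem_filter.1 hH).2, mul_ite, mul_zero, mul_comm]
    _ = _ := by rw [sum_strictRecCone_eq_sum_mixedCone hz]

end Localization

section SolidAngle

open Filter Topology ProbabilityTheory
open scoped Pointwise

lemma setOf_lt_mul_exp_neg_sq_norm {E : Type*} [NormedAddCommGroup E] {c t : ℝ}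
    (hc : 0 < c) (ht : 0 < t) :
    {x : E | t < c * Real.exp (-‖x‖ ^ 2 / 2)} = Metric.ball 0 √(-2 * Real.log (t / c)) := by
  ext x
  rw [Set.mem_ofPred_eq, mem_ball_zero_iff, Real.lt_sqrt (norm_nonneg x), ← div_lt_iff₀' hc,
    ← Real.log_lt_iff_lt_exp (div_pos ht hc)]
  constructor <;> intro h <;> linarith

variable {E : Type*} [NormedAddCommGroup E] [InnerProductSpace ℝ E] [FiniteDimensional ℝ E]
  [MeasurableSpace E] [BorelSpace E]

lemma charFun_withDensity_exp_neg_sq_norm {c : ℝ} (hc : 0 ≤ c) (t : E) :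
    charFun (volume.withDensity fun x : E => ENNReal.ofReal (c * Real.exp (-‖x‖ ^ 2 / 2))) t =
      c * ((2 * Real.pi) ^ (Module.finrank ℝ E / 2 : ℝ) : ℝ) * Complex.exp (-‖t‖ ^ 2 / 2) := by
  have hcpow : (((2 * Real.pi) ^ (Module.finrank ℝ E / 2 : ℝ) : ℝ) : ℂ) =
      (Real.pi / (1 / 2 : ℂ)) ^ (Module.finrank ℝ E / 2 : ℂ) := by
    rw [Complex.ofReal_cpow (by positivity)]
    push_cast
    congr 1
    ring
  have hgauss := GaussianFourier.integral_cexp_neg_mul_sq_norm_add (b := 1 / 2) (by norm_num)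
    Complex.I t
  rw [charFun_apply, integral_withDensity_eq_integral_toReal_smul (by fun_prop)
    (Eventually.of_forall fun x => ENNReal.ofReal_lt_top), hcpow, mul_assoc]
  have hexp : Complex.I ^ 2 * (‖t‖ : ℂ) ^ 2 / (4 * (1 / 2)) = -‖t‖ ^ 2 / 2 := by
    rw [Complex.I_sq]
    ring
  rw [← hexp, ← hgauss, ← integral_const_mul]
  refine integral_congr_ae (Eventually.of_forall fun x => ?_)
  have hnonneg : 0 ≤ c * Real.exp (-‖x‖ ^ 2 / 2) := by positivity
  simp only [ENNReal.toReal_ofReal hnonneg, Complex.real_smul, Complex.ofReal_mul,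
    Complex.ofReal_exp, Complex.exp_add, real_inner_comm t x]
  push_cast
  ring_nf

lemma stdGaussian_eq_withDensity :
    stdGaussian E = volume.withDensity fun x => ENNReal.ofReal
      (((2 * Real.pi) ^ (Module.finrank ℝ E / 2 : ℝ))⁻¹ * Real.exp (-‖x‖ ^ 2 / 2)) := by
  have hc : 0 < (2 * Real.pi) ^ (Module.finrank ℝ E / 2 : ℝ) := by positivity
  have hint : Integrable fun x : E =>
      ((2 * Real.pi) ^ (Module.finrank ℝ E / 2 : ℝ))⁻¹ * Real.exp (-‖x‖ ^ 2 / 2) := by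
    have h := (GaussianFourier.integrable_cexp_neg_mul_sq_norm_add (b := 1 / 2) (by norm_num) 0
      (0 : E)).norm
    refine (h.congr (Eventually.of_forall fun x => ?_)).const_mul _
    have hexp : -(1 / 2) * (‖x‖ : ℂ) ^ 2 = ((-‖x‖ ^ 2 / 2 : ℝ) : ℂ) := by
      push_cast
      ring
    simp only [zero_mul, add_zero, hexp, Complex.norm_exp, Complex.ofReal_re]
  have := isFiniteMeasure_withDensity_ofReal hint.2
  refine Measure.ext_of_charFun (funext fun t => ?_)
  rw [charFun_stdGaussian, charFun_withDensity_exp_neg_sq_norm (by positivity),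
    ← Complex.ofReal_mul, inv_mul_cancel₀ hc.ne', Complex.ofReal_one, one_mul]

lemma stdGaussian_absolutelyContinuous : stdGaussian E ≪ volume := by
  rw [stdGaussian_eq_withDensity]
  exact withDensity_absolutelyContinuous _ _

lemma volume_inter_ball (S : Set E) {r : ℝ} (hr : 0 < r) :
    volume (S ∩ Metric.ball 0 r) =
      ENNReal.ofReal (r ^ Module.finrank ℝ E) * volume (r⁻¹ • S ∩ Metric.ball 0 1) := by
  rw [← Measure.addHaar_smul_of_nonneg volume hr.le, Set.smul_set_inter₀ hr.ne',
    smul_inv_smul₀ hr.ne', smul_unitBall_of_pos hr]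

lemma volume_inter_ball_mul_of_smul_eq {A : Set E} (hA : ∀ r : ℝ, 0 < r → r • A = A) (r : ℝ) :
    volume (A ∩ Metric.ball 0 r) * volume (Metric.ball (0 : E) 1) =
      volume (A ∩ Metric.ball 0 1) * volume (Metric.ball (0 : E) r) := by
  rcases le_or_gt r 0 with hr | hr
  · rw [Metric.ball_eq_empty.2 hr, Set.inter_empty, measure_empty, zero_mul, mul_zero]
  · rw [volume_inter_ball A hr, hA _ (inv_pos.2 hr), Measure.addHaar_ball_of_pos _ _ hr]
    ring

/-- The uniform probability measure on the unit ball. -/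
def ballMeasure (E : Type*) [NormedAddCommGroup E] [InnerProductSpace ℝ E]
    [FiniteDimensional ℝ E] [MeasurableSpace E] [BorelSpace E] : Measure E :=
  cond volume (Metric.ball 0 1)

lemma ballMeasure_apply (A : Set E) :
    ballMeasure E A = volume (A ∩ Metric.ball 0 1) / volume (Metric.ball (0 : E) 1) := by
  rw [ballMeasure, cond_apply measurableSet_ball, Set.inter_comm, mul_comm, div_eq_mul_inv]

lemma stdGaussian_eq_ballMeasure {A : Set E} (hmeas : MeasurableSet A)
    (hA : ∀ r : ℝ, 0 < r → r • A = A) : stdGaussian E A = ballMeasure E A := by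
  set c : ℝ := ((2 * Real.pi) ^ (Module.finrank ℝ E / 2 : ℝ))⁻¹
  have hc : 0 < c := by positivity
  have hlayer {B : Set E} (hB : MeasurableSet B) : stdGaussian E B = ∫⁻ t in Set.Ioi (0 : ℝ),
      volume (B ∩ Metric.ball 0 √(-2 * Real.log (t / c))) := by
    rw [stdGaussian_eq_withDensity, withDensity_apply _ hB, lintegral_eq_lintegral_meas_lt _
      (Eventually.of_forall fun x => by positivity) (by fun_prop)]
    refine setLIntegral_congr_fun measurableSet_Ioi fun t ht => ?_
    rw [setOf_lt_mul_exp_neg_sq_norm hc ht, Measure.restrict_apply measurableSet_ball,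
      Set.inter_comm]
  have hball : volume (Metric.ball (0 : E) 1) ≠ 0 := (Metric.measure_ball_pos _ _ one_pos).ne'
  have hball' : volume (Metric.ball (0 : E) 1) ≠ ⊤ := measure_ball_lt_top.ne
  have huniv : stdGaussian E Set.univ = 1 := measure_univ
  rw [ballMeasure_apply, ENNReal.eq_div_iff hball hball', mul_comm]
  calc stdGaussian E A * volume (Metric.ball (0 : E) 1)
      = ∫⁻ t in Set.Ioi (0 : ℝ), volume (A ∩ Metric.ball 0 1) *
          volume (Metric.ball (0 : E) √(-2 * Real.log (t / c))) := by
        rw [hlayer hmeas, ← lintegral_mul_const' _ _ hball']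
        exact lintegral_congr fun t => volume_inter_ball_mul_of_smul_eq hA _
    _ = volume (A ∩ Metric.ball 0 1) * stdGaussian E Set.univ := by
        rw [hlayer MeasurableSet.univ, ← lintegral_const_mul']
        · simp only [Set.univ_inter]
        · exact ((measure_mono Set.inter_subset_right).trans_lt measure_ball_lt_top).ne
    _ = volume (A ∩ Metric.ball 0 1) := by rw [huniv, mul_one]

lemma tendsto_volume_inter_ball_div {S A : Set E} (hS : MeasurableSet S) (hA : MeasurableSet A)
    (hcone : ∀ r : ℝ, 0 < r → r • A = A)
    (h : ∀ᵐ z ∂(volume : Measure E), ∀ᶠ R : ℝ in atTop, R • z ∈ S ↔ z ∈ A) :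
    Tendsto (fun R : ℝ => (volume (S ∩ Metric.ball 0 R)).toReal /
      (volume (Metric.ball (0 : E) R)).toReal) atTop (𝓝 ((stdGaussian E).real A)) := by
  have : IsFiniteMeasure (ballMeasure E) := by
    unfold ballMeasure; infer_instance
  have hlim : Tendsto (fun R : ℝ => ballMeasure E ((R • ·) ⁻¹' S)) atTop
      (𝓝 (stdGaussian E A)) := by
    rw [stdGaussian_eq_ballMeasure hA hcone]
    exact tendsto_measure_of_ae_tendsto_indicator_of_isFiniteMeasure atTop hA
      (fun R => measurable_const_smul R hS) (cond_absolutelyContinuous.ae_le h)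
  refine ((ENNReal.tendsto_toReal (measure_ne_top _ _)).comp hlim).congr' ?_
  filter_upwards [eventually_gt_atTop 0] with R hR
  have hfactor : ENNReal.ofReal (R ^ Module.finrank ℝ E) ≠ 0 := by simpa using pow_pos hR _
  rw [Function.comp_apply, Set.preimage_smul₀ hR.ne', ballMeasure_apply, ← ENNReal.toReal_div,
    volume_inter_ball S hR, Measure.addHaar_ball_of_pos _ _ hR,
    ENNReal.mul_div_mul_left _ _ hfactor ENNReal.ofReal_ne_top]

lemma indepFun_starProjection (W : Submodule ℝ E) :
    IndepFun (fun z => W.starProjection z) (fun z => z - W.starProjection z) (stdGaussian E) := by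
  refine HasGaussianLaw.indepFun_of_covariance_inner
    (IsGaussian.hasGaussianLaw_id.map (W.starProjection.prod (.id ℝ E - W.starProjection)))
    fun x y => ?_
  have horth : inner ℝ (W.starProjection x) (y - W.starProjection y) = 0 :=
    (W.mem_orthogonal _).1 (W.sub_starProjection_mem_orthogonal y) _
      (W.starProjection_apply_mem x)
  rw [← horth, ← innerSL_apply_apply ℝ, ← covarianceBilin_stdGaussian, covarianceBilin_apply_eq_cov]
  · congr 1 <;> ext z
    · exact (W.inner_starProjection_left_eq_right x z).symm
    · rw [inner_sub_left, inner_sub_right, W.inner_starProjection_left_eq_right]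
  · exact IsGaussian.memLp_two_id

lemma map_reflection_stdGaussian (W : Submodule ℝ E) :
    (stdGaussian E).map W.reflection = stdGaussian E := stdGaussian_map _

lemma ae_notMem_of_ne_top {W : Submodule ℝ E} (hW : W ≠ ⊤) : ∀ᵐ z ∂(volume : Measure E), z ∉ W :=
  measure_eq_zero_iff_ae_notMem.1 (Measure.addHaar_submodule volume W hW)

end SolidAngle

section GenericDirections

open ProbabilityTheory
open scoped Pointwise

variable {𝒜}

lemma ker_linear_comp_proj_ne_top {F : Face 𝒜} {ℓ : Idx 𝒜}
    (h : ¬ F.dir ≤ LinearMap.ker ℓ.1.linear) :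
    LinearMap.ker (ℓ.1.linear ∘ₗ F.proj.toLinearMap) ≠ ⊤ := fun htop => h fun v hv => by
  have hmem : v ∈ LinearMap.ker (ℓ.1.linear ∘ₗ F.proj.toLinearMap) := htop ▸ Submodule.mem_top
  have hproj : F.proj v = v := Submodule.starProjection_eq_self_iff.2 hv
  rwa [LinearMap.mem_ker, LinearMap.comp_apply, ContinuousLinearMap.coe_coe, hproj] at hmem

lemma comap_sub_proj_orthogonal_ne_top {F G : Face 𝒜} (h : ¬ G.dir ≤ F.dir) :
    G.dirᗮ.comap (ContinuousLinearMap.id ℝ (V n) - F.proj).toLinearMap ≠ ⊤ :=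
  fun htop => h fun v hv => by
    have hmem : v - F.proj v ∈ G.dirᗮ := htop.ge (Submodule.mem_top (x := v))
    have hzero : inner ℝ (v - F.proj v) (v - F.proj v) = 0 := by
      rw [inner_sub_right, F.inner_sub_proj v (F.proj_mem v),
        (G.dir.mem_orthogonal' _).1 hmem v hv, sub_zero]
    rw [sub_eq_zero.1 (inner_self_eq_zero.1 hzero)]
    exact F.proj_mem v

lemma ae_isGeneric (𝒜 : Finset (AffForm n)) :
    ∀ᵐ z ∂(volume : Measure (V n)), IsGeneric 𝒜 z := by
  have hlin : ∀ᵐ z ∂(volume : Measure (V n)), ∀ (F : Face 𝒜) (ℓ : Idx 𝒜),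
      ¬ F.dir ≤ LinearMap.ker ℓ.1.linear → ℓ.1.linear (F.proj z) ≠ 0 :=
    ae_all_iff.2 fun F => ae_all_iff.2 fun ℓ => Filter.eventually_imp_distrib_left.2 fun h =>
      ae_notMem_of_ne_top (ker_linear_comp_proj_ne_top h)
  have horth : ∀ᵐ z ∂(volume : Measure (V n)), ∀ F G : Face 𝒜,
      ¬ G.dir ≤ F.dir → z - F.proj z ∉ G.dirᗮ :=
    ae_all_iff.2 fun F => ae_all_iff.2 fun G => Filter.eventually_imp_distrib_left.2 fun h =>
      ae_notMem_of_ne_top (comap_sub_proj_orthogonal_ne_top h)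
  filter_upwards [hlin, horth] with z h₁ h₂ using ⟨h₁, h₂⟩

end GenericDirections

section Angles

open ProbabilityTheory
open scoped Pointwise

variable {𝒜}

lemma measurableSet_setOf_sign_eq {α : Type*} [MeasurableSpace α] {f : α → ℝ}
    (hf : Measurable f) (s : SignType) : MeasurableSet {x | SignType.sign (f x) = s} := by
  cases s
  · simpa only [SignType.zero_eq_zero, sign_eq_zero_iff] using
      measurableSet_eq_fun hf measurable_const
  · simpa only [SignType.neg_eq_neg_one, sign_eq_neg_one_iff] using
      measurableSet_lt hf measurable_const
  · simpa only [SignType.pos_eq_one, sign_eq_one_iff] using measurableSet_lt measurable_const hf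

lemma measurableSet_setOf_forall_sign_linear (p : Idx 𝒜 → Prop) (σ : Idx 𝒜 → SignType) :
    MeasurableSet {v : V n | ∀ ℓ : Idx 𝒜, p ℓ → SignType.sign (ℓ.1.linear v) = σ ℓ} := by
  simp only [Set.ofPred_forall]
  refine MeasurableSet.iInter fun ℓ => MeasurableSet.iInter fun _ => ?_
  exact measurableSet_setOf_sign_eq
    ℓ.1.linear.continuous_of_finiteDimensional.measurable _

lemma measurableSet_tangentCone (H D : Face 𝒜) : MeasurableSet (tangentCone H D) :=
  measurableSet_setOf_forall_sign_linear _ _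

lemma measurableSet_strictRecCone (H : Face 𝒜) : MeasurableSet (strictRecCone H) :=
  measurableSet_setOf_forall_sign_linear _ _

lemma measurableSet_normalCone (H D : Face 𝒜) : MeasurableSet (normalCone H D) := by
  simp only [normalCone, Set.ofPred_forall]
  exact (isClosed_iInter fun v => isClosed_iInter fun _ =>
    isClosed_le (by fun_prop) continuous_const).measurableSet

lemma measurableSet_limitCone (H D : Face 𝒜) : MeasurableSet (limitCone H D) :=
  (H.proj.measurable (measurableSet_strictRecCone H)).inter
    ((measurable_id.sub H.proj.measurable) (measurableSet_normalCone H D))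

lemma measurableSet_mixedCone (F K C : Face 𝒜) : MeasurableSet (mixedCone F K C) :=
  (K.proj.measurable (measurableSet_tangentCone F K)).inter
    ((measurable_id.sub K.proj.measurable) (measurableSet_normalCone K C))

lemma smul_limitCone (H D : Face 𝒜) {r : ℝ} (hr : 0 < r) :
    r • limitCone H D = limitCone H D := by
  have hnonpos (a : ℝ) : r⁻¹ * a ≤ 0 ↔ a ≤ 0 :=
    smul_nonpos_iff_nonpos_of_pos_left (inv_pos.2 hr)
  ext z
  rw [Set.mem_smul_set_iff_inv_smul_mem₀ hr.ne', mem_limitCone, mem_limitCone, map_smul,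
    ← smul_sub]
  simp only [strictRecCone, normalCone, Set.mem_ofPred_eq, map_smul, smul_eq_mul, sign_mul,
    sign_pos (inv_pos.2 hr), one_mul, inner_smul_left, conj_trivial,
    hnonpos]

/-- The image of `limitCone G F` under the reflection in `G.dir`. -/
def reflectedLimitCone (G F : Face 𝒜) : Set (V n) :=
  {z | G.proj z ∈ strictRecCone G ∧ -(z - G.proj z) ∈ normalCone G F}

lemma measurableSet_reflectedLimitCone (G F : Face 𝒜) :
    MeasurableSet (reflectedLimitCone G F) :=
  (G.proj.measurable (measurableSet_strictRecCone G)).inter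
    ((measurable_id.sub G.proj.measurable).neg (measurableSet_normalCone G F))

/-- The solid angle of `limitCone H D`, as a fraction of the whole space. -/
def limitAngle (H D : Face 𝒜) : ℝ := (stdGaussian (V n)).real (limitCone H D)

/-- The solid angle of `mixedCone F K C`, as a fraction of the whole space. -/
def mixedAngle (F K C : Face 𝒜) : ℝ := (stdGaussian (V n)).real (mixedCone F K C)

lemma stdGaussian_reflectedLimitCone (G F : Face 𝒜) :
    (stdGaussian (V n)).real (reflectedLimitCone G F) = limitAngle G F := by
  have hpre : G.dir.reflection ⁻¹' limitCone G F = reflectedLimitCone G F := by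
    ext z
    have hproj : G.proj (G.dir.reflection z) = G.proj z := by
      have hself : G.proj (G.proj z) = G.proj z :=
        Submodule.starProjection_eq_self_iff.2 (G.proj_mem z)
      rw [Submodule.reflection_apply, map_sub, map_nsmul, ← Face.proj, hself, two_smul,
        add_sub_cancel_right]
    have hsub : G.dir.reflection z - G.proj z = -(z - G.proj z) := by
      rw [Submodule.reflection_apply, Face.proj]
      module
    rw [Set.mem_preimage, mem_limitCone, hproj, hsub]
    rfl
  rw [limitAngle, ← hpre, ← map_measureReal_apply G.dir.reflection.continuous.measurable
    (measurableSet_limitCone G F), map_reflection_stdGaussian]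

lemma tangentCone_subset_dir {G F : Face 𝒜} (h : G ≤ F) {v : V n} (hv : v ∈ tangentCone G F) :
    v ∈ F.dir := Face.mem_dir.2 fun ℓ hℓ =>
  sign_eq_zero_iff.1 ((hv ℓ (Face.sgn_eq_zero_of_le h hℓ)).trans hℓ)

lemma proj_proj {G F : Face 𝒜} (h : G ≤ F) (z : V n) : G.proj (F.proj z) = G.proj z :=
  congrArg (fun p : V n →L[ℝ] V n => p z)
    (Submodule.starProjection_comp_starProjection_of_le (Face.dir_le_dir h))

lemma proj_proj_of_ge {G F : Face 𝒜} (h : G ≤ F) (z : V n) : F.proj (G.proj z) = G.proj z :=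
  Submodule.starProjection_eq_self_iff.2 (Face.dir_le_dir h (G.proj_mem z))

lemma proj_mem_reflectedLimitCone {G F : Face 𝒜} (h : G ≤ F) {z : V n} :
    F.proj z ∈ reflectedLimitCone G F ↔ z ∈ reflectedLimitCone G F := by
  have hinner {v : V n} (hv : v ∈ tangentCone G F) :
      inner ℝ (-(F.proj z - G.proj z)) v = inner ℝ (-(z - G.proj z)) v := by
    have hsplit : -(z - G.proj z) = -(F.proj z - G.proj z) - (z - F.proj z) := by abel
    rw [hsplit, inner_sub_left _ (z - F.proj z),
      F.inner_sub_proj z (tangentCone_subset_dir h hv), sub_zero]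
  rw [reflectedLimitCone, Set.mem_ofPred_eq, Set.mem_ofPred_eq, proj_proj h]
  exact and_congr_right fun _ => forall₂_congr fun v hv => by rw [hinner hv]

lemma sub_proj_mem_mixedCone {F K C : Face 𝒜} (h : F ≤ K) {z : V n} :
    z - F.proj z ∈ mixedCone F K C ↔ z ∈ mixedCone F K C := by
  have hproj : K.proj (z - F.proj z) = K.proj z - F.proj z := by rw [map_sub, proj_proj_of_ge h]
  rw [mixedCone, Set.mem_ofPred_eq, Set.mem_ofPred_eq, hproj, sub_sub_sub_cancel_right]
  refine and_congr_left' ⟨fun hmem => ?_, fun hmem => ?_⟩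
  · simpa only [sub_add_cancel] using add_mem_tangentCone hmem (F.proj_mem z)
  · simpa only [sub_eq_add_neg] using add_mem_tangentCone hmem (F.dir.neg_mem (F.proj_mem z))

lemma limitAngle_mul_mixedAngle {G F K : Face 𝒜} (hGF : G ≤ F) (hFK : F ≤ K) (C : Face 𝒜) :
    limitAngle G F * mixedAngle F K C =
      (stdGaussian (V n)).real (reflectedLimitCone G F ∩ mixedCone F K C) := by
  -- The two cones constrain complementary components, which are independent Gaussians.
  have hindep := (indepFun_starProjection F.dir).measure_inter_preimage_eq_mul _ _
    (measurableSet_reflectedLimitCone G F) (measurableSet_mixedCone F K C)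
  have hpre₁ : F.dir.starProjection ⁻¹' reflectedLimitCone G F = reflectedLimitCone G F :=
    Set.ext fun z => proj_mem_reflectedLimitCone hGF
  have hpre₂ : (fun z => z - F.dir.starProjection z) ⁻¹' mixedCone F K C = mixedCone F K C :=
    Set.ext fun z => sub_proj_mem_mixedCone hFK
  rw [hpre₁, hpre₂] at hindep
  rw [← stdGaussian_reflectedLimitCone, mixedAngle, measureReal_def, measureReal_def,
    measureReal_def, hindep, ENNReal.toReal_mul]

section FilterMem

variable {Ω ι : Type*} (s : Finset ι) (w : ι → ℝ) {A : ι → Set Ω} [∀ i, DecidablePred (· ∈ A i)]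

lemma sum_filter_mem_eq_sum_indicator (z : Ω) :
    ∑ i ∈ s with z ∈ A i, w i = ∑ i ∈ s, (A i).indicator (fun _ => w i) z := by
  classical
  rw [sum_filter]
  exact sum_congr rfl fun i _ => (Set.indicator_apply (A i) (fun _ => w i) z).symm

variable [MeasurableSpace Ω] (μ : Measure Ω) [IsFiniteMeasure μ]

lemma integrable_sum_filter_mem (hA : ∀ i, MeasurableSet (A i)) :
    Integrable (fun z => ∑ i ∈ s with z ∈ A i, w i) μ := by
  simp only [sum_filter_mem_eq_sum_indicator]
  exact integrable_finsetSum _ fun i _ => (integrable_const (w i)).indicator (hA i)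

lemma integral_sum_filter_mem (hA : ∀ i, MeasurableSet (A i)) :
    ∫ z, ∑ i ∈ s with z ∈ A i, w i ∂μ = ∑ i ∈ s, w i * μ.real (A i) := by
  simp only [sum_filter_mem_eq_sum_indicator]
  rw [integral_finsetSum _ fun i _ => (integrable_const (w i)).indicator (hA i)]
  exact sum_congr rfl fun i _ => by rw [integral_indicator_const _ (hA i), smul_eq_mul, mul_comm]

end FilterMem

lemma limitAngle_self_mul_mixedAngle (G C : Face 𝒜) :
    limitAngle G G * mixedAngle G G C = limitAngle G C := by
  rw [limitAngle_mul_mixedAngle le_rfl le_rfl]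
  have htangent (z : V n) : G.proj z ∈ tangentCone G G := fun ℓ hℓ => by
    rw [Face.mem_dir.1 (G.proj_mem z) ℓ hℓ, sign_zero, hℓ]
  have hnormal (z : V n) : -(z - G.proj z) ∈ normalCone G G := fun v hv => by
    rw [inner_neg_left, G.inner_sub_proj z (tangentCone_subset_dir le_rfl hv), neg_zero]
  congr 1
  ext z
  simp only [reflectedLimitCone, mixedCone, Set.mem_inter_iff, Set.mem_ofPred_eq, htangent,
    hnormal, and_true, true_and, mem_limitCone]

open Classical in
lemma sum_limitAngle_mul_mixedAngle_eq_zero {G K : Face 𝒜} (h : G < K) (C : Face 𝒜) :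
    ∑ F : Face 𝒜 with G ≤ F ∧ F ≤ K, (-1 : ℝ) ^ F.dim * (limitAngle G F * mixedAngle F K C) =
      0 := by
  have hprod {F : Face 𝒜} (hF : F ∈ ({F | G ≤ F ∧ F ≤ K} : Finset (Face 𝒜))) :=
    limitAngle_mul_mixedAngle (mem_filter.1 hF).2.1 (mem_filter.1 hF).2.2 C
  rw [sum_congr rfl fun F hF => by rw [hprod hF], ← integral_sum_filter_mem _ _ _ fun F =>
    (measurableSet_reflectedLimitCone G F).inter (measurableSet_mixedCone F K C)]
  refine integral_eq_zero_of_ae ?_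
  filter_upwards [stdGaussian_absolutelyContinuous.ae_le (ae_isGeneric 𝒜)] with z hz
  rw [Finset.filter_filter, Pi.zero_apply]
  by_cases hcommon : G.proj z ∈ strictRecCone G ∧ z - K.proj z ∈ normalCone K C
  · rw [← sum_neg_one_pow_dim_eq_zero hz h]
    refine sum_congr (filter_congr fun F _ => ?_) fun _ _ => rfl
    simp only [reflectedLimitCone, mixedCone, Set.mem_inter_iff, Set.mem_ofPred_eq, hcommon,
      true_and, and_true]
    tauto
  · refine sum_eq_zero fun F hF => (hcommon ?_).elim
    exact ⟨(mem_filter.1 hF).2.2.1.1, (mem_filter.1 hF).2.2.2.2⟩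

open Classical in
lemma sum_mul_limitAngle (F C : Face 𝒜) (w : ℕ → ℝ) :
    ∑ D : Face 𝒜 with F * D = C, ∑ H : Face 𝒜 with H ≤ D,
        (-1 : ℝ) ^ D.dim * w H.dim * limitAngle H D =
      (-1 : ℝ) ^ C.dim * ∑ K : Face 𝒜 with F ≤ K ∧ K ≤ C, w K.dim * mixedAngle F K C := by
  simp only [limitAngle, mixedAngle,
    ← integral_sum_filter_mem _ _ (stdGaussian (V n)) fun H => measurableSet_limitCone H _,
    ← integral_sum_filter_mem _ _ (stdGaussian (V n)) fun K => measurableSet_mixedCone F K C]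
  rw [← integral_finsetSum _ fun D _ =>
    integrable_sum_filter_mem _ _ _ fun H => measurableSet_limitCone H D, ← integral_const_mul]
  refine integral_congr_ae ?_
  filter_upwards [stdGaussian_absolutelyContinuous.ae_le (ae_isGeneric 𝒜)] with z hz
  simpa only [Finset.filter_filter, and_assoc] using sum_mul_eq_limitCone hz F C w

end Angles

section AngleElt

variable {𝒜}

open Classical in
/-- The element of the Tits algebra with coefficients `(-1)^{dim C} Σ_{H ≤ C} w(dim H) α(H, C)`,
where `α(H, C)` is `limitAngle H C`; the intrinsic elements are of this form. -/
def angleElt (w : ℕ → ℝ) (C : Face 𝒜) : ℝ :=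
  (-1) ^ C.dim * ∑ H : Face 𝒜 with H ≤ C, w H.dim * limitAngle H C

open Classical in
lemma sum_limitAngle_mul_mixedAngle (G K C : Face 𝒜) :
    ∑ F : Face 𝒜 with G ≤ F ∧ F ≤ K, (-1 : ℝ) ^ F.dim * (limitAngle G F * mixedAngle F K C) =
      if G = K then (-1 : ℝ) ^ G.dim * limitAngle G C else 0 := by
  split_ifs with h
  · subst h
    rw [← limitAngle_self_mul_mixedAngle G C]
    have hsingle : ({F | G ≤ F ∧ F ≤ G} : Finset (Face 𝒜)) = {G} := by
      ext F
      rw [mem_filter, mem_singleton, ← le_antisymm_iff, eq_comm]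
      exact and_iff_right (mem_univ F)
    rw [hsingle, sum_singleton]
  · by_cases hGK : G ≤ K
    · exact sum_limitAngle_mul_mixedAngle_eq_zero (lt_of_le_of_ne hGK h) C
    · refine sum_eq_zero fun F hF => (hGK ?_).elim
      exact (mem_filter.1 hF).2.1.trans (mem_filter.1 hF).2.2

open Classical in
lemma sum_angleElt (F C : Face 𝒜) (w : ℕ → ℝ) :
    ∑ D : Face 𝒜 with F * D = C, angleElt w D =
      (-1 : ℝ) ^ C.dim * ∑ K : Face 𝒜 with F ≤ K ∧ K ≤ C, w K.dim * mixedAngle F K C := by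
  rw [← sum_mul_limitAngle]
  simp only [angleElt, mul_sum, mul_assoc]

open Classical in
lemma mulT_angleElt (u w : ℕ → ℝ) :
    mulT 𝒜 (angleElt u) (angleElt w) = angleElt fun k => (-1) ^ k * u k * w k := by
  ext C
  calc mulT 𝒜 (angleElt u) (angleElt w) C
      = ∑ F : Face 𝒜, angleElt u F * ∑ D : Face 𝒜 with F * D = C, angleElt w D := by
        simp only [mulT_apply, sum_filter, mul_sum, mul_ite, mul_zero]
    _ = ∑ F : Face 𝒜, ∑ G : Face 𝒜 with G ≤ F, ∑ K : Face 𝒜 with F ≤ K ∧ K ≤ C,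
          (-1) ^ C.dim * (u G.dim * w K.dim *
            ((-1) ^ F.dim * (limitAngle G F * mixedAngle F K C))) := by
        simp only [sum_angleElt]
        refine sum_congr rfl fun F _ => ?_
        rw [angleElt, mul_mul_mul_comm, sum_mul_sum, mul_sum]
        refine sum_congr rfl fun G _ => ?_
        rw [mul_sum]
        exact sum_congr rfl fun K _ => by ring
    _ = ∑ G : Face 𝒜, ∑ K : Face 𝒜 with K ≤ C, ∑ F : Face 𝒜 with G ≤ F ∧ F ≤ K,
          (-1) ^ C.dim * (u G.dim * w K.dim *
            ((-1) ^ F.dim * (limitAngle G F * mixedAngle F K C))) := by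
        rw [sum_comm' (s' := fun G => {F | G ≤ F}) (t' := univ) (by simp)]
        refine sum_congr rfl fun G _ => sum_comm' fun F K => ?_
        simp only [mem_filter, mem_univ, true_and, and_assoc]
    _ = (-1) ^ C.dim * ∑ G : Face 𝒜 with G ≤ C,
          (-1) ^ G.dim * u G.dim * w G.dim * limitAngle G C := by
        simp only [← mul_sum, sum_limitAngle_mul_mixedAngle, mul_ite, mul_zero, sum_ite_eq,
          mem_filter, mem_univ, true_and, ← sum_filter]
        congr 1
        exact sum_congr rfl fun G _ => by ring

end AngleElt

section NearestPoints

open Filter Topology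
open scoped Pointwise

lemma exists_add_smul_sub_mem_of_mem_intrinsicInterior {E : Type*} [NormedAddCommGroup E]
    [NormedSpace ℝ E] {Q : Set E} {y q : E} (hy : y ∈ intrinsicInterior ℝ Q) (hq : q ∈ Q) :
    ∃ ε > (0 : ℝ), y + ε • (y - q) ∈ Q := by
  obtain ⟨y, hy, rfl⟩ := hy
  have hmem (ε : ℝ) : AffineMap.lineMap (y : E) q (-ε) ∈ affineSpan ℝ Q :=
    AffineMap.lineMap_mem _ y.2 (subset_affineSpan ℝ Q hq)
  have hcont : Continuous fun ε : ℝ => (⟨_, hmem ε⟩ : affineSpan ℝ Q) :=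
    Continuous.subtype_mk (by fun_prop) _
  have htendsto := hcont.tendsto' 0 y (Subtype.ext (by simp))
  have hnear : ∀ᶠ ε : ℝ in 𝓝[>] 0, AffineMap.lineMap (y : E) q (-ε) ∈ Q :=
    nhdsWithin_le_nhds (htendsto (mem_interior_iff_mem_nhds.1 hy))
  obtain ⟨ε, hε, hpos⟩ := (hnear.and self_mem_nhdsWithin).exists
  refine ⟨ε, Set.mem_Ioi.1 hpos, ?_⟩
  convert hε using 1
  rw [AffineMap.lineMap_apply, vsub_eq_sub, vadd_eq_add]
  module

lemma mem_nearestPts_iff_inner_le_zero {P : Set (V n)} (hP : Convex ℝ P) {x y : V n}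
    (hy : y ∈ P) : y ∈ nearestPts P x ↔ ∀ w ∈ P, inner ℝ (x - y) (w - y) ≤ 0 := by
  have : Nonempty P := ⟨⟨y, hy⟩⟩
  rw [← norm_eq_iInf_iff_real_inner_le_zero hP hy]
  have hbdd : BddBelow (Set.range fun w : P => ‖x - w‖) :=
    ⟨0, Set.forall_mem_range.2 fun _ => norm_nonneg _⟩
  simp only [nearestPts, Set.mem_ofPred_eq, hy, true_and, dist_eq_norm]
  exact ⟨fun h => le_antisymm (le_ciInf fun w => h w w.2) (ciInf_le hbdd ⟨y, hy⟩),
    fun h w hw => h.trans_le (ciInf_le hbdd ⟨w, hw⟩)⟩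

lemma IsPolyFace.isExtreme {P Q : Set (V n)} (hQ : IsPolyFace P Q) :
    IsExtreme ℝ P Q := by
  obtain rfl | ⟨-, ℓ, hbdd, rfl⟩ := hQ
  · exact IsExtreme.rfl
  · refine IsExposed.isExtreme fun ⟨y, hy, hmax⟩ =>
      ⟨LinearMap.toContinuousLinearMap ℓ, Set.ext fun x => and_congr_right fun hx => ?_⟩
    have hle {w : V n} (hw : w ∈ P) : ℓ w ≤ sSup (ℓ '' P) := le_csSup hbdd ⟨w, hw, rfl⟩
    exact ⟨fun h w hw => (hle hw).trans h.ge, fun h => (hle hx).antisymm (hmax.ge.trans (h y hy))⟩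

variable {𝒜}

namespace Face

lemma convex_carrier (F : Face 𝒜) : Convex ℝ F.carrier := by
  simp only [carrier, faceSet, Set.ofPred_forall]
  exact convex_iInter fun ℓ => convex_setOf_sign_eq ℓ.1 (F.sgn ℓ)

lemma mem_closure_carrier {F : Face 𝒜} {x : V n} : x ∈ closure F.carrier ↔ ofPoint 𝒜 x ≤ F := by
  refine ⟨fun hx ℓ => ?_, fun h => ?_⟩
  · refine or_iff_not_imp_left.2 fun hne => ?_
    have hcont : ContinuousAt (fun y => SignType.sign (ℓ.1 y)) x :=
      (continuousAt_sign_of_ne_zero (sign_ne_zero.1 hne)).comp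
        ℓ.1.continuous_of_finiteDimensional.continuousAt
    obtain ⟨y, hyF, hy⟩ := ((mem_closure_iff_frequently.1 hx).and_eventually
      (hcont.eventually_mem (IsOpen.mem_nhds (isOpen_discrete {_}) rfl))).exists
    exact hy.symm.trans (hyF ℓ)
  · have htendsto : Tendsto (fun ε : ℝ => x + ε • (F.point - x)) (𝓝[>] 0) (𝓝 x) :=
      tendsto_nhdsWithin_of_tendsto_nhds (Continuous.tendsto' (by fun_prop) _ _ (by simp))
    have hcombine : combineSgn (ofPoint 𝒜 x).sgn F.sgn = F.sgn := funext fun ℓ => by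
      by_cases hℓ : (ofPoint 𝒜 x).sgn ℓ = 0
      · rw [combineSgn_of_eq_zero hℓ]
      · rw [combineSgn_of_ne_zero hℓ, sgn_eq_of_le h hℓ]
    have hmem := eventually_add_smul_sub_mem_faceSet (mem_carrier_ofPoint 𝒜 x) F.point_mem
    rw [hcombine] at hmem
    exact mem_closure_of_tendsto htendsto hmem

lemma mem_closure_carrier_iff_of_le {F G : Face 𝒜} (h : F ≤ G) {x : V n} :
    x ∈ closure F.carrier ↔
      x ∈ closure G.carrier ∧ ∀ ℓ : Idx 𝒜, F.sgn ℓ = 0 → ℓ.1 x = 0 := by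
  have key : ∀ s f g : SignType, (f = 0 ∨ f = g) →
      (s = 0 ∨ s = f ↔ (s = 0 ∨ s = g) ∧ (f = 0 → s = 0)) := by decide
  rw [mem_closure_carrier, mem_closure_carrier, le_def, le_def, ← forall_and]
  refine forall_congr' fun ℓ => ?_
  rw [← sign_eq_zero_iff (a := ℓ.1 x)]
  exact key _ _ _ (h ℓ)

lemma mem_closure_carrier_of_le {F G : Face 𝒜} (h : F ≤ G) {x : V n} (hx : x ∈ F.carrier) :
    x ∈ closure G.carrier :=
  mem_closure_carrier.2 ((mem_carrier_iff_ofPoint_eq.1 hx).trans_le h)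

lemma eventually_add_smul_mem_carrier {F : Face 𝒜} {x v : V n} (hx : x ∈ F.carrier)
    (hv : v ∈ F.dir) : ∀ᶠ ε : ℝ in 𝓝[>] 0, x + ε • v ∈ F.carrier := by
  filter_upwards [eventually_sign_add_smul (fun ℓ : Idx 𝒜 => ℓ.1) x v] with ε hε ℓ
  rw [hε ℓ, funext hx]
  by_cases hℓ : F.sgn ℓ = 0
  · rw [combineSgn_of_eq_zero hℓ, mem_dir.1 hv ℓ hℓ, sign_zero, hℓ]
  · rw [combineSgn_of_ne_zero hℓ]

lemma vectorSpan_carrier (F : Face 𝒜) : vectorSpan ℝ F.carrier = F.dir := by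
  refine le_antisymm (Submodule.span_le.2 ?_) fun v hv => ?_
  · rintro _ ⟨x, hx, y, hy, rfl⟩
    exact sub_mem_dir (fun _ => apply_eq_zero hx) fun _ => apply_eq_zero hy
  · obtain ⟨ε, hmem, hε⟩ :=
      ((eventually_add_smul_mem_carrier F.point_mem hv).and self_mem_nhdsWithin).exists
    rw [← (vectorSpan ℝ F.carrier).smul_mem_iff (ne_of_gt hε)]
    simpa only [vsub_eq_sub, add_sub_cancel_left] using
      vsub_mem_vectorSpan ℝ hmem F.point_mem

lemma dimS_carrier (F : Face 𝒜) : dimS F.carrier = F.dim := by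
  rw [dimS, vectorSpan_carrier, dim]

lemma exists_linear_eq_sub_sum_abs (F G : Face 𝒜) :
    ∃ φ : V n →ₗ[ℝ] ℝ, ∀ x ∈ closure G.carrier,
      φ x = φ F.point - ∑ ℓ : Idx 𝒜 with F.sgn ℓ = 0, |ℓ.1 x| := by
  refine ⟨-∑ ℓ : Idx 𝒜 with F.sgn ℓ = 0, (G.sgn ℓ : ℝ) • ℓ.1.linear, fun x hx => ?_⟩
  rw [eq_sub_iff_add_eq', ← eq_sub_iff_add_eq, ← map_sub, LinearMap.neg_apply,
    LinearMap.sum_apply, ← sum_neg_distrib]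
  refine sum_congr rfl fun ℓ hℓ => ?_
  have hp : ℓ.1 F.point = 0 := apply_eq_zero F.point_mem (mem_filter.1 hℓ).2
  rw [LinearMap.smul_apply, affine_linear_sub, hp, smul_eq_mul, zero_sub, mul_neg, neg_neg,
    ← sign_mul_self]
  rcases mem_closure_carrier.1 hx ℓ with h0 | h0
  · rw [sign_eq_zero_iff.1 h0, mul_zero, mul_zero]
  · rw [← h0]
    rfl

lemma isPolyFace_closure_carrier {F G : Face 𝒜} (h : F ≤ G) :
    IsPolyFace (closure G.carrier) (closure F.carrier) := by
  obtain ⟨φ, hφ⟩ := exists_linear_eq_sub_sum_abs F G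
  have hsum (x : V n) : 0 ≤ ∑ ℓ : Idx 𝒜 with F.sgn ℓ = 0, |ℓ.1 x| :=
    sum_nonneg fun _ _ => abs_nonneg _
  have hmax : IsGreatest (φ '' closure G.carrier) (φ F.point) :=
    ⟨⟨F.point, mem_closure_carrier_of_le h F.point_mem, rfl⟩, by
      rintro _ ⟨x, hx, rfl⟩
      rw [hφ x hx]
      exact sub_le_self _ (hsum x)⟩
  refine Or.inr ⟨F.nonempty.closure, φ, hmax.bddAbove, Set.ext fun x => ?_⟩
  rw [hmax.csSup_eq, mem_closure_carrier_iff_of_le h]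
  refine and_congr_right fun hx => ?_
  rw [hφ x hx, sub_eq_self, sum_eq_zero_iff_of_nonneg fun _ _ => abs_nonneg _]
  simp only [mem_filter, mem_univ, true_and, abs_eq_zero]

lemma carrier_subset_intrinsicInterior_closure (F : Face 𝒜) :
    F.carrier ⊆ intrinsicInterior ℝ (closure F.carrier) := fun y hy => by
  have hspan {x : V n} (hx : x ∈ affineSpan ℝ (closure F.carrier)) {ℓ : Idx 𝒜}
      (hℓ : F.sgn ℓ = 0) : ℓ.1 x = 0 := by
    have hle : affineSpan ℝ (closure F.carrier) ≤ (AffineSubspace.mk' (0 : ℝ) ⊥).comap ℓ.1 :=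
      affineSpan_le.2 fun w hw => by
        simpa using ((mem_closure_carrier_iff_of_le le_rfl).1 hw).2 ℓ hℓ
    simpa using hle hx
  have hnear : ∀ᶠ x in 𝓝 y, ∀ ℓ : Idx 𝒜, F.sgn ℓ ≠ 0 → SignType.sign (ℓ.1 x) = F.sgn ℓ := by
    refine Filter.eventually_all.2 fun ℓ => Filter.eventually_imp_distrib_left.2 fun hℓ => ?_
    have hcont : ContinuousAt (fun x => SignType.sign (ℓ.1 x)) y :=
      (continuousAt_sign_of_ne_zero (sign_ne_zero.1 (hy ℓ ▸ hℓ))).comp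
        ℓ.1.continuous_of_finiteDimensional.continuousAt
    exact hcont.eventually_mem (IsOpen.mem_nhds (isOpen_discrete {F.sgn ℓ}) (hy ℓ))
  refine ⟨⟨y, subset_affineSpan ℝ _ (subset_closure hy)⟩, mem_interior_iff_mem_nhds.2 ?_, rfl⟩
  filter_upwards [continuous_subtype_val.continuousAt.eventually hnear] with x hx
  refine subset_closure fun ℓ => ?_
  by_cases hℓ : F.sgn ℓ = 0
  · rw [hspan x.2 hℓ, sign_zero, hℓ]
  · exact hx ℓ hℓ

lemma carrier_ofPoint_subset {C : Face 𝒜} {Q : Set (V n)}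
    (hQ : IsExtreme ℝ (closure C.carrier) Q) {y : V n} (hy : y ∈ Q) :
    (ofPoint 𝒜 y).carrier ⊆ Q := fun q hq => by
  have hle : ofPoint 𝒜 y ≤ C := mem_closure_carrier.1 (hQ.subset hy)
  have hyF := mem_carrier_ofPoint 𝒜 y
  have hdir : y - q ∈ (ofPoint 𝒜 y).dir :=
    sub_mem_dir (fun _ => apply_eq_zero hyF) fun _ => apply_eq_zero hq
  obtain ⟨ε, hmem, hpos : 0 < ε⟩ :=
    ((eventually_add_smul_mem_carrier hyF hdir).and self_mem_nhdsWithin).exists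
  refine hQ.left_mem_of_mem_openSegment (mem_closure_carrier_of_le hle hq)
    (mem_closure_carrier_of_le hle hmem) hy
    ⟨ε / (1 + ε), 1 / (1 + ε), by positivity, by positivity, ?_, ?_⟩
  · rw [← add_div, add_comm, div_self (by positivity)]
  · match_scalars <;> field_simp
    ring

lemma vectorSpan_eq_dir_ofPoint {C : Face 𝒜} {Q : Set (V n)}
    (hQ : IsPolyFace (closure C.carrier) Q) {y : V n} (hy : y ∈ intrinsicInterior ℝ Q) :
    vectorSpan ℝ Q = (ofPoint 𝒜 y).dir := by
  have hyQ : y ∈ Q := intrinsicInterior_subset hy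
  refine le_antisymm ?_ ?_
  · rw [vectorSpan_eq_span_vsub_set_right ℝ hyQ, Submodule.span_le]
    rintro _ ⟨q, hq, rfl⟩
    change q - y ∈ _
    obtain ⟨ε, hε, hmem⟩ := exists_add_smul_sub_mem_of_mem_intrinsicInterior hy hq
    have hqC := mem_closure_carrier.1 (hQ.isExtreme.subset hq)
    have hεC := mem_closure_carrier.1 (hQ.isExtreme.subset hmem)
    refine mem_dir.2 fun ℓ hℓ => ?_
    have hy0 : ℓ.1 y = 0 := sign_eq_zero_iff.1 hℓ
    have hopp : SignType.sign (ℓ.1 (y + ε • (y - q))) = -SignType.sign (ℓ.1 q) := by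
      rw [affine_add_smul, affine_linear_sub, hy0, zero_add, zero_sub, sign_mul, sign_pos hε,
        one_mul, Left.sign_neg]
    have key : ∀ s t c : SignType, t = -s → (s = 0 ∨ s = c) → (t = 0 ∨ t = c) → s = 0 := by
      decide
    rw [affine_linear_sub, hy0, sub_zero]
    exact sign_eq_zero_iff.1 (key _ _ _ hopp (hqC ℓ) (hεC ℓ))
  · rw [← vectorSpan_carrier]
    exact vectorSpan_mono ℝ (carrier_ofPoint_subset hQ.isExtreme hyQ)

end Face

lemma mem_nearestPts_closure_iff {H C : Face 𝒜} (h : H ≤ C) {x y : V n} (hy : y ∈ H.carrier) :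
    y ∈ nearestPts (closure C.carrier) x ↔ x - y ∈ normalCone H C := by
  rw [mem_nearestPts_iff_inner_le_zero C.convex_carrier.closure
    (Face.mem_closure_carrier_of_le h hy), mem_normalCone_iff_disjoint h hy]
  have hclosure : Disjoint (openHalfspace (x - y) y) (closure C.carrier) ↔
      Disjoint (openHalfspace (x - y) y) C.carrier :=
    ⟨fun hd => hd.mono_right subset_closure,
      fun hd => hd.closure_right (isOpen_openHalfspace _ _)⟩
  rw [← hclosure, Set.disjoint_right]
  exact forall₂_congr fun w _ => by rw [mem_openHalfspace, not_lt]

lemma projSet_closure_carrier (C : Face 𝒜) (k : ℕ) :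
    projSet (closure C.carrier) k =
      ⋃ H : {H : Face 𝒜 // H ≤ C ∧ H.dim = k}, H.1.carrier + normalCone H.1 C := by
  ext x
  simp only [Set.mem_iUnion, Set.mem_add]
  constructor
  · rintro ⟨y, hy, Q, hQ, rfl, hyQ⟩
    have hle : Face.ofPoint 𝒜 y ≤ C := Face.mem_closure_carrier.1 hy.1
    have hmem := Face.mem_carrier_ofPoint 𝒜 y
    refine ⟨⟨_, hle, ?_⟩, y, hmem, x - y, (mem_nearestPts_closure_iff hle hmem).1 hy,
      add_sub_cancel y x⟩
    rw [dimS, Face.vectorSpan_eq_dir_ofPoint hQ hyQ, Face.dim]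
  · rintro ⟨⟨H, hle, rfl⟩, y, hy, m, hm, rfl⟩
    have hint := H.carrier_subset_intrinsicInterior_closure hy
    refine ⟨y, (mem_nearestPts_closure_iff hle hy).2 (by rwa [add_sub_cancel_left]),
      closure H.carrier, Face.isPolyFace_closure_carrier hle, ?_, hint⟩
    rw [dimS, Face.vectorSpan_eq_dir_ofPoint (Face.isPolyFace_closure_carrier hle) hint,
      Face.mem_carrier_iff_ofPoint_eq.1 hy]
    rfl

end NearestPoints

section FarAway

open Filter Topology
open scoped Pointwise

variable {𝒜}

lemma nonpos_of_frequently_mul_add_nonpos {a b : ℝ} (h : ∃ᶠ R : ℝ in atTop, R * a + b ≤ 0) :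
    a ≤ 0 := by
  by_contra! ha
  have htendsto : Tendsto (fun R : ℝ => R * a + b) atTop atTop :=
    tendsto_atTop_add_const_right _ _ (tendsto_id.atTop_mul_const ha)
  obtain ⟨R, hle, hgt⟩ := (h.and_eventually (htendsto.eventually_gt_atTop 0)).exists
  exact hle.not_gt hgt

/-- The directions of the rays contained in the closure of a face. -/
def recessionCone (C : Face 𝒜) : Set (V n) :=
  {w | ∀ ℓ : Idx 𝒜, ℓ.1.linear w = 0 ∨ SignType.sign (ℓ.1.linear w) = C.sgn ℓ}

lemma mem_recessionCone_of_mem_strictRecCone {H : Face 𝒜} {q : V n} (hdir : q ∈ H.dir)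
    (hq : q ∈ strictRecCone H) : q ∈ recessionCone H := fun ℓ =>
  or_iff_not_imp_left.2 fun hℓ => hq ℓ fun hle => hℓ (hle hdir)

lemma eventually_add_smul_mem_carrier_of_mem_recessionCone {C : Face 𝒜} {x w : V n}
    (hx : x ∈ C.carrier) (hw : w ∈ recessionCone C) : ∀ᶠ r : ℝ in atTop, x + r • w ∈ C.carrier := by
  filter_upwards [eventually_sign_add_smul_atTop (fun ℓ : Idx 𝒜 => ℓ.1) x w] with r hr ℓ
  rw [hr ℓ]
  set σ := fun i : Idx 𝒜 => SignType.sign (i.1.linear w)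
  by_cases hℓ : σ ℓ = 0
  · rw [combineSgn_of_eq_zero hℓ, hx ℓ]
  · rw [combineSgn_of_ne_zero hℓ]
    exact (hw ℓ).resolve_left fun h => hℓ (sign_eq_zero_iff.2 h)

lemma inner_sub_nonpos_of_mem_normalCone {H C : Face 𝒜} (h : H ≤ C) {m y w : V n}
    (hm : m ∈ normalCone H C) (hy : y ∈ H.carrier) (hw : w ∈ closure C.carrier) :
    inner ℝ m (w - y) ≤ 0 := by
  have hnear : y ∈ nearestPts (closure C.carrier) (y + m) :=
    (mem_nearestPts_closure_iff h hy).2 (by rwa [add_sub_cancel_left])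
  simpa only [add_sub_cancel_left] using
    (mem_nearestPts_iff_inner_le_zero C.convex_carrier.closure hnear.1).1 hnear w hw

lemma inner_nonpos_of_mem_normalCone {H K C : Face 𝒜} (hH : H ≤ C) (hK : K ≤ C) {m q : V n}
    (hm : m ∈ normalCone H C) (hdir : q ∈ K.dir) (hq : q ∈ strictRecCone K) :
    inner ℝ m q ≤ 0 := by
  refine nonpos_of_frequently_mul_add_nonpos (b := inner ℝ m (K.point - H.point))
    (Eventually.frequently ?_)
  have hray := mem_recessionCone_of_mem_strictRecCone hdir hq
  filter_upwards [eventually_add_smul_mem_carrier_of_mem_recessionCone K.point_mem hray] with R hR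
  have hle := inner_sub_nonpos_of_mem_normalCone hH hm H.point_mem
    (Face.mem_closure_carrier_of_le hK hR)
  rwa [add_sub_right_comm, inner_add_right, inner_smul_right, add_comm] at hle

lemma proj_eq_proj_of_mem_limitCone {H K C : Face 𝒜} (hH : H ≤ C) (hK : K ≤ C) {z : V n}
    (hzH : z ∈ limitCone H C) (hzK : z ∈ limitCone K C) : H.proj z = K.proj z := by
  have hHK := inner_nonpos_of_mem_normalCone hH hK hzH.2 (K.proj_mem z) hzK.1
  have hKH := inner_nonpos_of_mem_normalCone hK hH hzK.2 (H.proj_mem z) hzH.1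
  have hHH := H.inner_sub_proj z (H.proj_mem z)
  have hKK := K.inner_sub_proj z (K.proj_mem z)
  rw [← sub_eq_zero, ← real_inner_self_nonpos]
  simp only [inner_sub_left, inner_sub_right] at hHK hKH hHH hKK ⊢
  linarith

lemma mul_eq_left_of_mem_limitCone {z : V n} (hz : IsGeneric 𝒜 z) {H K C : Face 𝒜} (hH : H ≤ C)
    (hK : K ≤ C) (hzH : z ∈ limitCone H C) (hzK : z ∈ limitCone K C) : H * K = H := by
  set m := z - H.proj z
  have hmK : m ∈ normalCone K C := by
    rw [show m = z - K.proj z by rw [← proj_eq_proj_of_mem_limitCone hH hK hzH hzK]]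
    exact hzK.2
  have hle := inner_sub_nonpos_of_mem_normalCone hH hzH.2 H.point_mem
    (Face.mem_closure_carrier_of_le hK K.point_mem)
  have hge := inner_sub_nonpos_of_mem_normalCone hK hmK K.point_mem
    (Face.mem_closure_carrier_of_le hH H.point_mem)
  have hinner : inner ℝ m (K.point - H.point) = 0 :=
    hle.antisymm (by rwa [← neg_sub, inner_neg_right, neg_nonpos] at hge)
  obtain ⟨ε, hε⟩ := (Face.eventually_add_smul_sub_mem_faceSet H.point_mem K.point_mem).exists
  have hhalfspace : openHalfspace m (H.point + ε • (K.point - H.point)) =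
      openHalfspace m H.point := by
    rw [openHalfspace, inner_add_right, inner_smul_right, hinner, mul_zero, add_zero]
    rfl
  have hmul : m ∈ normalCone (H * K) C := by
    rw [mem_normalCone_iff_disjoint (Face.mul_le hH hK) hε, hhalfspace,
      ← mem_normalCone_iff_disjoint hH H.point_mem]
    exact hzH.2
  have hdir : (H * K).dir ≤ H.dir := by
    by_contra hnot
    exact hz.sub_proj_notMem_orthogonal H _ hnot (mem_orthogonal_of_mem_normalCone hmul)
  exact (Face.eq_of_le_of_dir_eq (Face.le_mul H K)
    ((Face.dir_le_dir (Face.le_mul H K)).antisymm hdir)).symm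

lemma IsGeneric.eq_of_mem_limitCone {z : V n} (hz : IsGeneric 𝒜 z) {H K C : Face 𝒜}
    (hH : H ≤ C) (hK : K ≤ C) (hzH : z ∈ limitCone H C) (hzK : z ∈ limitCone K C) : H = K :=
  calc H = H * K := (mul_eq_left_of_mem_limitCone hz hH hK hzH hzK).symm
    _ = K * H := Face.mul_comm_of_le hH hK
    _ = K := mul_eq_left_of_mem_limitCone hz hK hH hzK hzH

lemma mem_carrier_add_normalCone_iff {H C : Face 𝒜} {x : V n} :
    x ∈ H.carrier + normalCone H C ↔ H.point + H.proj (x - H.point) ∈ H.carrier ∧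
      x - H.point - H.proj (x - H.point) ∈ normalCone H C := by
  constructor
  · rintro ⟨y, hy, m, hm, rfl⟩
    have hproj : H.proj (y + m - H.point) = y - H.point := by
      refine Submodule.eq_starProjection_of_mem_of_inner_eq_zero ?_ fun w hw => ?_
      · exact Face.sub_mem_dir (fun _ => Face.apply_eq_zero hy)
          fun _ => Face.apply_eq_zero H.point_mem
      · rw [show y + m - H.point - (y - H.point) = m by abel]
        exact (Submodule.mem_orthogonal' _ _).1 (mem_orthogonal_of_mem_normalCone hm) w hw
    rw [hproj, add_sub_cancel, show y + m - H.point - (y - H.point) = m by abel]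
    exact ⟨hy, hm⟩
  · rintro ⟨hy, hm⟩
    rw [sub_sub] at hm
    exact ⟨_, hy, _, hm, add_sub_cancel _ _⟩

lemma measurableSet_carrier (F : Face 𝒜) : MeasurableSet F.carrier := by
  simp only [Face.carrier, faceSet, Set.ofPred_forall]
  exact MeasurableSet.iInter fun ℓ =>
    measurableSet_setOf_sign_eq ℓ.1.continuous_of_finiteDimensional.measurable _

lemma measurableSet_carrier_add_normalCone (H C : Face 𝒜) :
    MeasurableSet (H.carrier + normalCone H C) := by
  have hset : H.carrier + normalCone H C =
      (fun x => H.point + H.proj (x - H.point)) ⁻¹' H.carrier ∩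
        (fun x => x - H.point - H.proj (x - H.point)) ⁻¹' normalCone H C :=
    Set.ext fun _ => mem_carrier_add_normalCone_iff
  rw [hset]
  exact ((measurableSet_carrier H).preimage (by fun_prop)).inter
    ((measurableSet_normalCone H C).preimage (by fun_prop))

lemma exists_mem_carrier_add_normalCone (C : Face 𝒜) (x : V n) :
    ∃ H ≤ C, x ∈ H.carrier + normalCone H C := by
  obtain ⟨y, hyC, hy⟩ := isClosed_closure.exists_infDist_eq_dist C.nonempty.closure x
  have hle := Face.mem_closure_carrier.1 hyC
  have hmem := Face.mem_carrier_ofPoint 𝒜 y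
  have hnear : y ∈ nearestPts (closure C.carrier) x :=
    ⟨hyC, fun w hw => hy.ge.trans (Metric.infDist_le_dist_of_mem hw)⟩
  exact ⟨_, hle, y, hmem, x - y, (mem_nearestPts_closure_iff hle hmem).1 hnear,
    add_sub_cancel y x⟩

lemma IsGeneric.mem_limitCone_of_frequently {z : V n} (hz : IsGeneric 𝒜 z) {H C : Face 𝒜}
    (h : ∃ᶠ R : ℝ in atTop, R • z ∈ H.carrier + normalCone H C) : z ∈ limitCone H C := by
  simp only [mem_carrier_add_normalCone_iff, map_sub, map_smul] at h
  constructor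
  · obtain ⟨R, ⟨hmem, -⟩, hR⟩ := (h.and_eventually (eventually_sign_add_smul_atTop
      (fun ℓ : Idx 𝒜 => ℓ.1) (H.point - H.proj H.point) (H.proj z))).exists
    intro ℓ hℓ
    set σ := fun i : Idx 𝒜 => SignType.sign (i.1.linear (H.proj z))
    have hσ : σ ℓ ≠ 0 := sign_ne_zero.2 (hz.linear_proj_ne_zero H ℓ hℓ)
    rw [← hmem ℓ, show H.point + (R • H.proj z - H.proj H.point) =
        H.point - H.proj H.point + R • H.proj z by abel, hR ℓ, combineSgn_of_ne_zero hσ]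
  · intro v hv
    refine nonpos_of_frequently_mul_add_nonpos (b := -inner ℝ (H.point - H.proj H.point) v)
      (h.mono fun R hR => ?_)
    convert hR.2 v hv using 1
    simp only [inner_sub_left, real_inner_smul_left]
    ring

lemma IsGeneric.exists_mem_limitCone {z : V n} (hz : IsGeneric 𝒜 z) (C : Face 𝒜) :
    ∃ H ≤ C, z ∈ limitCone H C := by
  by_contra! hnot
  have hnever : ∀ᶠ R : ℝ in atTop, ∀ H : Face 𝒜, H ≤ C → R • z ∉ H.carrier + normalCone H C :=
    eventually_all.2 fun H => eventually_imp_distrib_left.2 fun hH => not_frequently.1 fun h =>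
      hnot H hH (hz.mem_limitCone_of_frequently h)
  obtain ⟨R, hR⟩ := hnever.exists
  obtain ⟨H, hH, hmem⟩ := exists_mem_carrier_add_normalCone C (R • z)
  exact hR H hH hmem

lemma IsGeneric.eventually_smul_mem_carrier_add_normalCone {z : V n} (hz : IsGeneric 𝒜 z)
    (C : Face 𝒜) : ∀ᶠ R : ℝ in atTop, ∀ H : Face 𝒜, H ≤ C →
      (R • z ∈ H.carrier + normalCone H C ↔ z ∈ limitCone H C) := by
  have hsubset : ∀ᶠ R : ℝ in atTop, ∀ H : Face 𝒜,
      R • z ∈ H.carrier + normalCone H C → z ∈ limitCone H C :=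
    eventually_all.2 fun H => by
      by_cases hH : z ∈ limitCone H C
      · exact Eventually.of_forall fun _ _ => hH
      · filter_upwards [not_frequently.1 fun h => hH (hz.mem_limitCone_of_frequently h)]
          with R hR h using (hR h).elim
  filter_upwards [hsubset] with R hR H hH
  refine ⟨hR H, fun hzH => ?_⟩
  obtain ⟨K, hK, hmem⟩ := exists_mem_carrier_add_normalCone C (R • z)
  rwa [hz.eq_of_mem_limitCone hH hK hzH (hR K hmem)]

end FarAway

section IntrinsicVolumes

open Filter Topology ProbabilityTheory
open scoped Pointwise

variable {𝒜}

lemma measurableSet_projSet_closure_carrier (C : Face 𝒜) (k : ℕ) :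
    MeasurableSet (projSet (closure C.carrier) k) := by
  rw [projSet_closure_carrier]
  exact MeasurableSet.iUnion fun H => measurableSet_carrier_add_normalCone H.1 C

lemma measureReal_biUnion_limitCone {C : Face 𝒜} {s : Finset (Face 𝒜)} (hs : ∀ H ∈ s, H ≤ C) :
    (stdGaussian (V n)).real (⋃ H ∈ s, limitCone H C) = ∑ H ∈ s, limitAngle H C := by
  have hgeneric : ∀ᵐ z ∂stdGaussian (V n), IsGeneric 𝒜 z :=
    stdGaussian_absolutelyContinuous.ae_le (ae_isGeneric 𝒜)
  refine measureReal_biUnion_finset₀ (fun H hH K hK hne => ?_)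
    fun H _ => (measurableSet_limitCone H C).nullMeasurableSet
  exact measure_mono_null (fun z hz hgen => hne
    (IsGeneric.eq_of_mem_limitCone hgen (hs H hH) (hs K hK) hz.1 hz.2)) hgeneric

open Classical in
lemma sum_limitAngle (C : Face 𝒜) : ∑ H : Face 𝒜 with H ≤ C, limitAngle H C = 1 := by
  rw [← measureReal_biUnion_limitCone fun H hH => (mem_filter.1 hH).2,
    ← probReal_univ (μ := stdGaussian (V n))]
  refine measureReal_congr (eventuallyEq_univ.2 ?_)
  filter_upwards [stdGaussian_absolutelyContinuous.ae_le (ae_isGeneric 𝒜)] with z hz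
  obtain ⟨H, hH, hzH⟩ := hz.exists_mem_limitCone C
  exact Set.mem_biUnion (mem_filter.2 ⟨mem_univ H, hH⟩) hzH

open Classical in
lemma HasIntrinsicVolumes.eq_sum_limitAngle {C : Face 𝒜} {v : ℕ → ℝ}
    (hv : HasIntrinsicVolumes (closure C.carrier) v) (k : ℕ) :
    v k = ∑ H : Face 𝒜 with H ≤ C ∧ H.dim = k, limitAngle H C := by
  rw [← measureReal_biUnion_limitCone fun H hH => (mem_filter.1 hH).2.1]
  refine tendsto_nhds_unique (hv k) (tendsto_volume_inter_ball_div
    (measurableSet_projSet_closure_carrier C k)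
    (Finset.measurableSet_biUnion _ fun H _ => measurableSet_limitCone H C)
    (fun r hr => ?_) ?_)
  · simp only [Set.smul_set_iUnion₂, smul_limitCone _ _ hr]
  · filter_upwards [ae_isGeneric 𝒜] with z hz
    filter_upwards [hz.eventually_smul_mem_carrier_add_normalCone C] with R hR
    simp only [projSet_closure_carrier, Set.mem_iUnion, mem_filter, mem_univ, true_and,
      Subtype.exists, exists_prop]
    exact exists_congr fun H => and_congr_right fun hH => hR H hH.1

end IntrinsicVolumes

section RecessionCone

open Filter Topology AffineSpace

variable {𝒜}

lemma mem_dirL {w : V n} : w ∈ dirL 𝒜 ↔ ∀ ℓ : Idx 𝒜, ℓ.1.linear w = 0 := Submodule.mem_iInf _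

lemma dirL_le_dir (F : Face 𝒜) : dirL 𝒜 ≤ F.dir := fun _ hw =>
  Face.mem_dir.2 fun ℓ _ => mem_dirL.1 hw ℓ

lemma finrank_dirL_le_dim (F : Face 𝒜) : Module.finrank ℝ (dirL 𝒜) ≤ F.dim :=
  Submodule.finrank_mono (dirL_le_dir F)

lemma eventually_sign_add_asymptoticNhds {E : Type*} [NormedAddCommGroup E] [NormedSpace ℝ E]
    (φ : E →L[ℝ] ℝ) (c : ℝ) {q : E} (hq : φ q ≠ 0) :
    ∀ᶠ p in asymptoticNhds ℝ E q, SignType.sign (φ p + c) = SignType.sign (φ q) := by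
  rw [asymptoticNhds_eq_smul, ← map₂_smul, ← map_prod_eq_map₂, eventually_map]
  have hlim : Tendsto (fun y : ℝ × E => φ y.2 + y.1⁻¹ * c) (atTop ×ˢ 𝓝 q) (𝓝 (φ q)) := by
    simpa only [zero_mul, add_zero, Function.comp_apply] using
      ((φ.continuous.tendsto q).comp tendsto_snd).add
        ((tendsto_inv_atTop_zero.comp tendsto_fst).mul_const c)
  have hsign := (continuousAt_sign_of_ne_zero hq).tendsto.comp hlim
  rw [nhds_discrete SignType, tendsto_pure] at hsign
  filter_upwards [hsign, tendsto_fst.eventually (eventually_gt_atTop 0)] with y hy hpos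
  have hscale : φ (y.1 • y.2) + c = y.1 * (φ y.2 + y.1⁻¹ * c) := by
    rw [map_smul, smul_eq_mul, mul_add, mul_inv_cancel_left₀ hpos.ne']
  rw [hscale, sign_mul, sign_pos hpos, one_mul]
  exact hy

lemma mem_recessionCone_of_mkQ_mem_asymptoticCone {C : Face 𝒜} {w : V n}
    (hw : (dirL 𝒜).mkQ w ∈ asymptoticCone ℝ ((dirL 𝒜).mkQ '' C.carrier)) :
    w ∈ recessionCone C := by
  have : IsClosed (dirL 𝒜 : Set (V n)) := Submodule.closed_of_finiteDimensional _
  intro ℓ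
  refine or_iff_not_imp_left.2 fun hℓ => ?_
  let φ := ((dirL 𝒜).liftQ ℓ.1.linear fun v hv => mem_dirL.1 hv ℓ).toContinuousLinearMap
  have hφ (v : V n) : φ ((dirL 𝒜).mkQ v) = ℓ.1.linear v := rfl
  have hev := eventually_sign_add_asymptoticNhds φ (ℓ.1 0) (q := (dirL 𝒜).mkQ w) hℓ
  obtain ⟨_, ⟨x, hx, rfl⟩, hsign⟩ := (Frequently.and_eventually hw hev).exists
  have happly : ℓ.1.linear x + ℓ.1 0 = ℓ.1 x := by
    rw [← sub_zero x, affine_linear_sub, sub_add_cancel, sub_zero]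
  rw [hφ, hφ, happly, hx ℓ] at hsign
  exact hsign.symm

lemma essBounded_iff {C : Face 𝒜} : EssBounded 𝒜 C ↔ recessionCone C ⊆ dirL 𝒜 := by
  have : IsClosed (dirL 𝒜 : Set (V n)) := Submodule.closed_of_finiteDimensional _
  have hmkQ (w : V n) : (dirL 𝒜).mkQ w = 0 ↔ w ∈ dirL 𝒜 := Submodule.Quotient.mk_eq_zero _
  refine isBounded_iff_asymptoticCone_subset_singleton.trans ⟨fun h w hw => ?_, fun h q hq => ?_⟩
  · have hray : Tendsto (fun r : ℝ => (dirL 𝒜).mkQ (C.point + r • w)) atTop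
        (asymptoticNhds ℝ _ ((dirL 𝒜).mkQ w)) := by
      simp only [map_add, map_smul, add_comm ((dirL 𝒜).mkQ C.point)]
      exact (tendsto_id.atTop_smul_const_tendsto_asymptoticNhds _).asymptoticNhds_vadd_const _
    refine (hmkQ w).1 (h (hray.frequently (Eventually.frequently ?_)))
    filter_upwards [eventually_add_smul_mem_carrier_of_mem_recessionCone C.point_mem hw]
      with r hr using Set.mem_image_of_mem _ hr
  · obtain ⟨w, rfl⟩ := (dirL 𝒜).mkQ_surjective q
    exact (hmkQ w).2 (h (mem_recessionCone_of_mkQ_mem_asymptoticCone hq))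

/-- The face containing the points `x + r • w` for `x` in `F` and `r` large. -/
def Face.shift (F : Face 𝒜) (w : V n) : Face 𝒜 :=
  ⟨combineSgn (fun ℓ => SignType.sign (ℓ.1.linear w)) F.sgn, by
    obtain ⟨r, hr⟩ := (eventually_sign_add_smul_atTop (fun ℓ : Idx 𝒜 => ℓ.1) F.point w).exists
    rw [funext F.sign_point] at hr
    exact ⟨_, hr⟩⟩

lemma Face.shift_sgn_of_eq_zero (F : Face 𝒜) {w : V n} {ℓ : Idx 𝒜} (h : ℓ.1.linear w = 0) :
    (F.shift w).sgn ℓ = F.sgn ℓ :=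
  combineSgn_of_eq_zero (σ := fun i : Idx 𝒜 => SignType.sign (i.1.linear w))
    (sign_eq_zero_iff.2 h)

lemma Face.shift_sgn_of_ne_zero (F : Face 𝒜) {w : V n} {ℓ : Idx 𝒜} (h : ℓ.1.linear w ≠ 0) :
    (F.shift w).sgn ℓ = SignType.sign (ℓ.1.linear w) :=
  combineSgn_of_ne_zero (σ := fun i : Idx 𝒜 => SignType.sign (i.1.linear w)) (sign_ne_zero.2 h)

lemma Face.shift_le {F C : Face 𝒜} (h : F ≤ C) {w : V n} (hw : w ∈ recessionCone C) :
    F.shift w ≤ C := fun ℓ => by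
  by_cases hℓ : ℓ.1.linear w = 0
  · rw [F.shift_sgn_of_eq_zero hℓ]
    exact h ℓ
  · exact Or.inr ((F.shift_sgn_of_ne_zero hℓ).trans ((hw ℓ).resolve_left hℓ))

lemma Face.shift_eq_iff {F G : Face 𝒜} {w : V n} :
    F.shift w = G ↔ (∀ ℓ : Idx 𝒜, ℓ.1.linear w = 0 → F.sgn ℓ = G.sgn ℓ) ∧
      ∀ ℓ : Idx 𝒜, ℓ.1.linear w ≠ 0 → SignType.sign (ℓ.1.linear w) = G.sgn ℓ := by
  refine ⟨?_, fun ⟨hzero, hne⟩ => Face.ext (funext fun ℓ => ?_)⟩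
  · rintro rfl
    exact ⟨fun ℓ hℓ => (F.shift_sgn_of_eq_zero hℓ).symm,
      fun ℓ hℓ => (F.shift_sgn_of_ne_zero hℓ).symm⟩
  · by_cases hℓ : ℓ.1.linear w = 0
    · rw [F.shift_sgn_of_eq_zero hℓ, hzero ℓ hℓ]
    · rw [F.shift_sgn_of_ne_zero hℓ, hne ℓ hℓ]

lemma Face.le_iff_of_shift_eq {F G C : Face 𝒜} {w : V n} (hw : w ∈ recessionCone C) (hG : G ≤ C)
    (hshift : F.shift w = G) :
    F ≤ C ↔ ∀ ℓ : Idx 𝒜, ℓ.1.linear w ≠ 0 → F.sgn ℓ ≠ -G.sgn ℓ := by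
  have key : ∀ f c : SignType, c ≠ 0 → ((f = 0 ∨ f = c) ↔ f ≠ -c) := by decide
  refine forall_congr' fun ℓ => ?_
  by_cases hℓ : ℓ.1.linear w = 0
  · rw [(shift_eq_iff.1 hshift).1 ℓ hℓ]
    exact iff_of_true (hG ℓ) fun h => (h hℓ).elim
  · have hGℓ := (shift_eq_iff.1 hshift).2 ℓ hℓ
    rw [← (hw ℓ).resolve_left hℓ, hGℓ, key _ _ (hGℓ ▸ sign_ne_zero.2 hℓ), imp_iff_right hℓ]

lemma Face.le_and_shift_eq_iff {F G C : Face 𝒜} {w : V n} (hw : w ∈ recessionCone C) (hG : G ≤ C)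
    (hshift : G.shift w = G) :
    F ≤ C ∧ F.shift w = G ↔ (∀ ℓ : Idx 𝒜, ℓ.1.linear w = 0 → F.sgn ℓ = G.sgn ℓ) ∧
      ∀ ℓ : Idx 𝒜, ℓ.1.linear w ≠ 0 → F.sgn ℓ ≠ -G.sgn ℓ := by
  constructor
  · rintro ⟨hF, hFG⟩
    exact ⟨(shift_eq_iff.1 hFG).1, (le_iff_of_shift_eq hw hG hFG).1 hF⟩
  · rintro ⟨hF, hne⟩
    have hFG : F.shift w = G := shift_eq_iff.2 ⟨hF, (shift_eq_iff.1 hshift).2⟩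
    exact ⟨(le_iff_of_shift_eq hw hG hFG).2 hne, hFG⟩

lemma isOpen_setOf_sign_eq (f : AffForm n) {s : SignType} (hs : s ≠ 0) :
    IsOpen {x | SignType.sign (f x) = s} := by
  have hf : Continuous f := f.continuous_of_finiteDimensional
  cases s
  · exact (hs rfl).elim
  · simpa only [SignType.neg_eq_neg_one, sign_eq_neg_one_iff] using isOpen_lt hf continuous_const
  · simpa only [SignType.pos_eq_one, sign_eq_one_iff] using isOpen_lt continuous_const hf

open Classical in
lemma sum_neg_one_pow_dim_shift_eq {C G : Face 𝒜} {w : V n} (hw : w ∈ recessionCone C)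
    (hw' : w ∉ dirL 𝒜) (hG : G ≤ C) (hshift : G.shift w = G) :
    ∑ F : Face 𝒜 with F ≤ C ∧ F.shift w = G, (-1 : ℝ) ^ F.dim = 0 := by
  rw [mem_dirL] at hw'
  push Not at hw'
  obtain ⟨ℓ₀, hℓ₀⟩ := hw'
  set I : Finset (Idx 𝒜) := {ℓ | ℓ.1.linear w ≠ 0}
  have hI {ℓ : Idx 𝒜} : ℓ ∈ I ↔ ℓ.1.linear w ≠ 0 := by
    simp only [I, mem_filter, mem_univ, true_and]
  have hGsgn := (Face.shift_eq_iff.1 hshift).2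
  have hneg_ne : -G.sgn ℓ₀ ≠ 0 := by
    have key : ∀ s : SignType, s ≠ 0 → -s ≠ 0 := by decide
    exact key _ (hGsgn ℓ₀ hℓ₀ ▸ sign_ne_zero.2 hℓ₀)
  set x := (G.shift (-w)).point
  have hx : x ∈ cell I G.sgn := mem_cell.2 fun ℓ hℓ => by
    rw [Face.sign_point, Face.shift_sgn_of_eq_zero]
    simpa only [hI, not_not, map_neg, neg_eq_zero] using hℓ
  have hneg : ∀ ℓ ∈ I, SignType.sign (ℓ.1 x) = -G.sgn ℓ := fun ℓ hℓ => by
    rw [Face.sign_point, Face.shift_sgn_of_ne_zero, map_neg, Left.sign_neg, hGsgn ℓ (hI.1 hℓ)]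
    simpa only [map_neg, neg_ne_zero] using hI.1 hℓ
  have hzero := sum_facesIn_ne_neg_disjoint (isOpen_setOf_sign_eq ℓ₀.1 hneg_ne)
    (convex_setOf_sign_eq ℓ₀.1 _) (hneg ℓ₀ (hI.2 hℓ₀)) hx hneg
  rw [← hzero]
  refine sum_congr (ext fun F => ?_) fun _ _ => rfl
  simp only [mem_filter, mem_univ, true_and, mem_facesIn, hI, not_not,
    Face.le_and_shift_eq_iff hw hG hshift]
  refine and_congr_right fun _ => (and_iff_left_of_imp fun hne => ?_).symm
  exact Set.disjoint_left.2 fun y hyU hy => hne ℓ₀ hℓ₀ ((hy ℓ₀).symm.trans hyU)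

open Classical in
lemma sum_neg_one_pow_dim_eq_zero_of_mem_recessionCone {C : Face 𝒜} {w : V n}
    (hw : w ∈ recessionCone C) (hw' : w ∉ dirL 𝒜) :
    ∑ F : Face 𝒜 with F ≤ C, (-1 : ℝ) ^ F.dim = 0 := by
  rw [← sum_fiberwise _ fun F => F.shift w]
  refine sum_eq_zero fun G _ => ?_
  rw [filter_filter]
  by_cases hG : ∃ F ≤ C, F.shift w = G
  · obtain ⟨F, hF, rfl⟩ := hG
    refine sum_neg_one_pow_dim_shift_eq hw hw' (Face.shift_le hF hw) ?_
    exact Face.shift_eq_iff.2 ⟨fun _ _ => rfl, fun ℓ hℓ => (F.shift_sgn_of_ne_zero hℓ).symm⟩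
  · push Not at hG
    rw [filter_false_of_mem fun F _ h => hG F h.1 h.2, sum_empty]

end RecessionCone

section IntrinsicElements

variable {𝒜}

lemma neg_one_pow_mul_self (k : ℕ) : (-1 : ℝ) ^ k * (-1) ^ k = 1 := by
  rw [← mul_pow, neg_one_mul, neg_neg, one_pow]

lemma neg_one_pow_tsub {d k : ℕ} (h : d ≤ k) : (-1 : ℝ) ^ (k - d) = (-1) ^ k * (-1) ^ d := by
  obtain ⟨m, rfl⟩ := Nat.exists_eq_add_of_le h
  rw [Nat.add_sub_cancel_left, pow_add, mul_right_comm, neg_one_pow_mul_self, one_mul]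

lemma intrinsicElt_eq_angleElt {v : Face 𝒜 → ℕ → ℝ}
    (hv : ∀ F : Face 𝒜, HasIntrinsicVolumes (closure F.carrier) (v F)) (t : ℝ) :
    intrinsicElt 𝒜 v t =
      angleElt fun k => (-1) ^ k * t ^ (k - Module.finrank ℝ (dirL 𝒜)) := by
  classical
  ext C
  rw [intrinsicElt, angleElt, Face.dimS_carrier]
  congr 1
  rw [← sum_fiberwise_of_maps_to (g := Face.dim) (t := Icc (Module.finrank ℝ (dirL 𝒜)) C.dim)
    fun H hH => mem_Icc.2 ⟨finrank_dirL_le_dim H,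
      Submodule.finrank_mono (Face.dir_le_dir (mem_filter.1 hH).2)⟩]
  refine sum_congr rfl fun k _ => ?_
  rw [(hv C).eq_sum_limitAngle, mul_right_comm, mul_sum, filter_filter]
  exact sum_congr rfl fun H hH => by rw [(mem_filter.1 hH).2.2]

lemma mulT_intrinsicElt {v : Face 𝒜 → ℕ → ℝ}
    (hv : ∀ F : Face 𝒜, HasIntrinsicVolumes (closure F.carrier) (v F)) (s t : ℝ) :
    mulT 𝒜 (intrinsicElt 𝒜 v s) (intrinsicElt 𝒜 v t) = intrinsicElt 𝒜 v (s * t) := by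
  simp only [intrinsicElt_eq_angleElt hv, mulT_angleElt]
  congr 1
  ext k
  rw [← mul_assoc ((-1) ^ k) ((-1) ^ k), neg_one_pow_mul_self, one_mul, mul_left_comm, mul_pow]

lemma intrinsicElt_neg_one {v : Face 𝒜 → ℕ → ℝ}
    (hv : ∀ F : Face 𝒜, HasIntrinsicVolumes (closure F.carrier) (v F)) (C : Face 𝒜) :
    intrinsicElt 𝒜 v (-1) C = (-1) ^ (C.dim - Module.finrank ℝ (dirL 𝒜)) := by
  have hcoeff (H : Face 𝒜) : (-1 : ℝ) ^ H.dim * (-1) ^ (H.dim - Module.finrank ℝ (dirL 𝒜)) =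
      (-1) ^ Module.finrank ℝ (dirL 𝒜) := by
    rw [neg_one_pow_tsub (finrank_dirL_le_dim H), ← mul_assoc, neg_one_pow_mul_self, one_mul]
  rw [intrinsicElt_eq_angleElt hv, angleElt, neg_one_pow_tsub (finrank_dirL_le_dim C)]
  simp only [hcoeff]
  rw [← mul_sum, sum_limitAngle, mul_one]

lemma proj_mem_recessionCone {H C : Face 𝒜} (h : H ≤ C) {z : V n} (hz : z ∈ limitCone H C) :
    H.proj z ∈ recessionCone C := fun ℓ => by
  by_cases hℓ : H.dir ≤ LinearMap.ker ℓ.1.linear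
  · exact Or.inl (hℓ (H.proj_mem z))
  · rw [← sign_eq_zero_iff, hz.1 ℓ hℓ]
    exact h ℓ

lemma limitAngle_eq_zero {H C : Face 𝒜} (h : H ≤ C) (hC : recessionCone C ⊆ dirL 𝒜)
    (hdim : H.dim ≠ Module.finrank ℝ (dirL 𝒜)) : limitAngle H C = 0 := by
  rw [limitAngle, measureReal_eq_zero_iff, measure_eq_zero_iff_ae_notMem]
  filter_upwards [stdGaussian_absolutelyContinuous.ae_le (ae_isGeneric 𝒜)] with z hgen hz
  refine hdim ?_
  have hproj := mem_dirL.1 (hC (proj_mem_recessionCone h hz))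
  have hdir : H.dir ≤ dirL 𝒜 := fun w hw => mem_dirL.2 fun ℓ => by
    by_contra hℓ
    exact IsGeneric.linear_proj_ne_zero hgen H ℓ (fun hle => hℓ (hle hw)) (hproj ℓ)
  rw [Face.dim, hdir.antisymm (dirL_le_dir H)]

lemma intrinsicElt_one_of_essBounded {v : Face 𝒜 → ℕ → ℝ}
    (hv : ∀ F : Face 𝒜, HasIntrinsicVolumes (closure F.carrier) (v F)) {C : Face 𝒜}
    (hC : EssBounded 𝒜 C) :
    intrinsicElt 𝒜 v 1 C = (-1) ^ (C.dim - Module.finrank ℝ (dirL 𝒜)) := by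
  classical
  have hterm (H : Face 𝒜) (hH : H ≤ C) : (-1 : ℝ) ^ H.dim * limitAngle H C =
      (-1) ^ Module.finrank ℝ (dirL 𝒜) * limitAngle H C := by
    by_cases hdim : H.dim = Module.finrank ℝ (dirL 𝒜)
    · rw [hdim]
    · rw [limitAngle_eq_zero hH (essBounded_iff.1 hC) hdim, mul_zero, mul_zero]
  simp only [intrinsicElt_eq_angleElt hv, angleElt, one_pow, mul_one]
  rw [sum_congr rfl fun H hH => hterm H (mem_filter.1 hH).2, ← mul_sum, sum_limitAngle, mul_one,
    neg_one_pow_tsub (finrank_dirL_le_dim C)]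

open Classical in
lemma filter_mul_eq_facesIn {F C : Face 𝒜} (h : F ≤ C) :
    ({D | F * D = C} : Finset (Face 𝒜)) = facesIn {ℓ | F.sgn ℓ ≠ 0} C.sgn := by
  ext D
  simp only [mem_filter, mem_univ, true_and, mem_facesIn, not_not]
  refine ⟨?_, fun hD => Face.ext (funext fun ℓ => ?_)⟩
  · rintro rfl ℓ hℓ
    exact (Face.mul_sgn_of_eq_zero D hℓ).symm
  · by_cases hℓ : F.sgn ℓ = 0
    · rw [Face.mul_sgn_of_eq_zero D hℓ, hD ℓ hℓ]
    · rw [Face.mul_sgn_of_ne_zero D hℓ, Face.sgn_eq_of_le h hℓ]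

lemma cellDir_sgn_of_le {F C : Face 𝒜} (h : F ≤ C) :
    cellDir {ℓ | F.sgn ℓ ≠ 0} C.sgn = C.dir := by
  ext w
  simp only [mem_cellDir, mem_filter, mem_univ, true_and, not_not, Face.mem_dir]
  exact forall_congr' fun ℓ => ⟨fun hw hℓ => hw (Face.sgn_eq_zero_of_le h hℓ) hℓ, fun hw _ => hw⟩

open Classical in
lemma sum_neg_one_pow_dim_mul_eq (F C : Face 𝒜) :
    ∑ D : Face 𝒜 with F * D = C, (-1 : ℝ) ^ D.dim = if F ≤ C then (-1) ^ C.dim else 0 := by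
  split_ifs with h
  · have hmem : C.point ∈ Set.univ ∩ cell {ℓ | F.sgn ℓ ≠ 0} C.sgn :=
      ⟨trivial, mem_cell.2 fun ℓ _ => C.sign_point ℓ⟩
    have hsum := sum_facesIn_eulerChar isOpen_univ convex_univ {ℓ | F.sgn ℓ ≠ 0} C.sgn
    rw [eulerChar_of_nonempty ⟨_, hmem⟩, cellDir_sgn_of_le h] at hsum
    rw [filter_mul_eq_facesIn h, Face.dim, ← hsum]
    refine sum_congr rfl fun D _ => ?_
    have hD : (Set.univ ∩ D.carrier).Nonempty := ⟨D.point, trivial, D.point_mem⟩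
    rw [eulerChar_of_nonempty hD, Face.dim]
  · refine sum_eq_zero fun D hD => (h ?_).elim
    exact (mem_filter.1 hD).2 ▸ Face.le_mul F D

open Classical in
lemma intrinsicElt_one {v : Face 𝒜 → ℕ → ℝ}
    (hv : ∀ F : Face 𝒜, HasIntrinsicVolumes (closure F.carrier) (v F)) (C : Face 𝒜) :
    intrinsicElt 𝒜 v 1 C = (-1) ^ C.dim * ∑ F : Face 𝒜 with F ≤ C, (-1) ^ F.dim := by
  calc intrinsicElt 𝒜 v 1 C
      = mulT 𝒜 (intrinsicElt 𝒜 v (-1)) (intrinsicElt 𝒜 v (-1)) C := by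
        rw [mulT_intrinsicElt hv, neg_one_mul, neg_neg]
    _ = ∑ F : Face 𝒜, (-1) ^ F.dim * ∑ D : Face 𝒜 with F * D = C, (-1) ^ D.dim := by
        simp only [mulT_apply, sum_filter, mul_sum, mul_ite, mul_zero, intrinsicElt_neg_one hv,
          neg_one_pow_tsub (finrank_dirL_le_dim _), mul_mul_mul_comm, neg_one_pow_mul_self,
          mul_one]
    _ = (-1) ^ C.dim * ∑ F : Face 𝒜 with F ≤ C, (-1) ^ F.dim := by
        simp only [sum_neg_one_pow_dim_mul_eq, mul_ite, mul_zero]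
        rw [← sum_filter, mul_sum]
        exact sum_congr rfl fun _ _ => mul_comm _ _

lemma intrinsicElt_one_of_not_essBounded {v : Face 𝒜 → ℕ → ℝ}
    (hv : ∀ F : Face 𝒜, HasIntrinsicVolumes (closure F.carrier) (v F)) {C : Face 𝒜}
    (hC : ¬ EssBounded 𝒜 C) : intrinsicElt 𝒜 v 1 C = 0 := by
  obtain ⟨w, hw, hw'⟩ := Set.not_subset.1 fun h => hC (essBounded_iff.2 h)
  rw [intrinsicElt_one hv, sum_neg_one_pow_dim_eq_zero_of_mem_recessionCone hw hw', mul_zero]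

end IntrinsicElements

open Classical in
/-- **Multiplicativity of intrinsic elements.** `ν_s · ν_t = ν_{st}`; moreover `ν_1`
is the unit element `υ = Σ_{F essentially bounded} (-1)^{rk F} H_F` and `ν_{-1}` is
the Takeuchi element `τ = Σ_F (-1)^{rk F} H_F`. -/
theorem intrinsic_mul {n : ℕ} (𝒜 : Finset (AffForm n))
    (h𝒜 : ∀ ℓ ∈ 𝒜, ℓ.linear ≠ 0)
    (v : Face 𝒜 → ℕ → ℝ)
    (hv : ∀ F : Face 𝒜, HasIntrinsicVolumes (closure (Face.carrier 𝒜 F)) (v F)) :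
    (∀ s t : ℝ, mulT 𝒜 (intrinsicElt 𝒜 v s) (intrinsicElt 𝒜 v t)
        = intrinsicElt 𝒜 v (s * t)) ∧
    intrinsicElt 𝒜 v 1 = (fun F => if EssBounded 𝒜 F then
        (-1 : ℝ) ^ (dimS (Face.carrier 𝒜 F) - Module.finrank ℝ (dirL 𝒜)) else 0) ∧
    intrinsicElt 𝒜 v (-1) = (fun F =>
        (-1 : ℝ) ^ (dimS (Face.carrier 𝒜 F) - Module.finrank ℝ (dirL 𝒜))) := by
  refine ⟨mulT_intrinsicElt hv, funext fun C => ?_, funext fun C => ?_⟩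
  · rw [Face.dimS_carrier]
    split_ifs with hC
    · exact intrinsicElt_one_of_essBounded hv hC
    · exact intrinsicElt_one_of_not_essBounded hv hC
  · rw [Face.dimS_carrier]
    exact intrinsicElt_neg_one hv C

end CharElts
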